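/- Let 2 < p ≤ 3. Assume condition (LD3) holds and max(|N(C_i)|, |{j ∈ 𝒥 : i ∈ C_j}|) ≤ κ for every i ∈ 𝒥, where N(C_i) = {j ∈ 𝒥 : C_i ∩ B_j ≠ ∅}. Then sup_{z∈ℝ} |F(z) − Φ(z)| ≤ 75 κ^{p−1} Σ_{i∈𝒥} E|X_i|^p. -/

import Mathlib

open MeasureTheory ProbabilityTheory Real

noncomputable def stdGaussianCDF : ℝ → ℝ :=
  fun z => ∫ x in Set.Iic z, (Real.sqrt (2 * Real.pi))⁻¹ * Real.exp (-x ^ 2 / 2)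

/-!
Stein's method with a smoothed indicator. Let `b = κ ^ (p - 1) * ∑ i, E |X i| ^ p`, and replace
the indicator of `(-∞, z]` by a piecewise linear `h` which decreases on an interval of length
`α = 16 * b`. If `f` is the Stein solution of `h`, local dependence turns `E h(W) - ∫ h dΦ` into a
sum of Taylor remainders of `f` over local blocks. Apart from a Lipschitz part, `f'` varies between
`W` and `W + s` only where `W` is close to the ramp of `h`, so the remainders are controlled once
`E[e 1{x ≤ W ≤ x + α}] ≤ 80 * b * E[e]` for every weight `e ≥ 0` depending only on one block.

To prove this concentration inequality, bound the indicator by a trapezoidal bump with primitive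
`F`, and compute `∑ j, E[e X_j (F(W) - F(W - Y_j))]` in two ways, where `Y_j` is the truncated sum
over `A j`. One side is small as `F` is bounded by a multiple of `α`; the other is close to the
expected bump, up to the effect of translating the bump by at most one. That effect is again
controlled by concentration: if the inequality holds with constant `δ`, then it holds with
`52 * b + 0.28 * δ`, and iterating from the trivial `δ = 1` reaches `80 * b`.

All moments are reduced to `b` by the weighted AM-GM inequality and by counting blocks.
-/

/-! ### Ramps and bumps -/

section Ramp

/-- The ramp of width `α` starting at `z`: it is `0` up to `z`, affine on `[z, z + α]` and `1`
after that. Its complement `1 - ramp α z` is the smoothing of the indicator of `(-∞, z]` used in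
Stein's method. -/
noncomputable def ramp (α z w : ℝ) : ℝ := max 0 (min 1 ((w - z) / α))

lemma ramp_nonneg (α z w : ℝ) : 0 ≤ ramp α z w := le_max_left _ _

lemma ramp_le_one (α z w : ℝ) : ramp α z w ≤ 1 := max_le zero_le_one (min_le_left _ _)

lemma abs_ramp_sub_ramp_le_one (α z v w : ℝ) : |ramp α z v - ramp α z w| ≤ 1 :=
  abs_sub_le_iff.2 ⟨by linarith [ramp_le_one α z v, ramp_nonneg α z w],
    by linarith [ramp_le_one α z w, ramp_nonneg α z v]⟩

lemma continuous_ramp (α z : ℝ) : Continuous (ramp α z) := by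
  unfold ramp; fun_prop

variable {α : ℝ}

lemma ramp_mono (hα : 0 < α) (z : ℝ) : Monotone (ramp α z) := fun w w' h => by
  unfold ramp; gcongr

lemma ramp_antitone_left (hα : 0 < α) (w : ℝ) : Antitone fun z => ramp α z w := fun z z' h => by
  dsimp only [ramp]; gcongr

lemma ramp_eq_zero (hα : 0 < α) {z w : ℝ} (h : w ≤ z) : ramp α z w = 0 :=
  max_eq_left <| (min_le_right _ _).trans <|
    div_nonpos_of_nonpos_of_nonneg (sub_nonpos.2 h) hα.le

lemma ramp_eq_one (hα : 0 < α) {z w : ℝ} (h : z + α ≤ w) : ramp α z w = 1 := by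
  have : 1 ≤ (w - z) / α := (one_le_div hα).2 (by linarith)
  rw [ramp, min_eq_left this, max_eq_right zero_le_one]

lemma mul_ramp (hα : 0 < α) (z w : ℝ) : α * ramp α z w = max 0 (min α (w - z)) := by
  rw [ramp, mul_max_of_nonneg _ _ hα.le, mul_min_of_nonneg _ _ hα.le, mul_zero, mul_one,
    mul_div_cancel₀ _ hα.ne']

lemma mul_ramp_sub_ramp (hα : 0 < α) (z : ℝ) {a b : ℝ} (hab : a ≤ b) :
    α * (ramp α z b - ramp α z a) = volume.real (Set.Icc a b ∩ Set.Icc z (z + α)) := by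
  rw [Set.Icc_inter_Icc, Real.volume_real_Icc, mul_sub, mul_ramp hα, mul_ramp hα]
  grind

lemma abs_ramp_add_sub_ramp_le (hα : 0 < α) (z w : ℝ) {t r : ℝ} (h : |t| ≤ r) :
    |ramp α z (w + t) - ramp α z w| ≤ ramp α z (w + r) - ramp α z (w - r) := by
  obtain ⟨hl, hr⟩ := abs_le.1 h
  have : 0 ≤ r := (abs_nonneg t).trans h
  have h₁ : ramp α z (w + t) ≤ ramp α z (w + r) := ramp_mono hα z (by linarith)
  have h₂ : ramp α z w ≤ ramp α z (w + r) := ramp_mono hα z (by linarith)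
  have h₃ : ramp α z (w - r) ≤ ramp α z (w + t) := ramp_mono hα z (by linarith)
  have h₄ : ramp α z (w - r) ≤ ramp α z w := ramp_mono hα z (by linarith)
  rw [abs_le]
  constructor <;> linarith

/-- A continuous majorant of the indicator of `[x, x + α]`, supported in `[x - α, x + 2α]`. -/
noncomputable def bump (α x w : ℝ) : ℝ := ramp α (x - α) w - ramp α (x + α) w

lemma bump_nonneg (hα : 0 < α) (x w : ℝ) : 0 ≤ bump α x w :=
  sub_nonneg.2 (ramp_antitone_left hα w (by linarith))

lemma bump_le_one (α x w : ℝ) : bump α x w ≤ 1 := by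
  rw [bump]
  linarith [ramp_le_one α (x - α) w, ramp_nonneg α (x + α) w]

lemma abs_bump_le_one (hα : 0 < α) (x w : ℝ) : |bump α x w| ≤ 1 := by
  rw [abs_of_nonneg (bump_nonneg hα x w)]
  exact bump_le_one α x w

lemma continuous_bump (α x : ℝ) : Continuous (bump α x) :=
  (continuous_ramp _ _).sub (continuous_ramp _ _)

lemma indicator_Icc_le_bump (hα : 0 < α) (x w : ℝ) :
    (Set.Icc x (x + α)).indicator 1 w ≤ bump α x w := by
  refine Set.indicator_apply_le' (fun hw => ?_) fun _ => bump_nonneg hα x w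
  rw [bump, ramp_eq_one hα (by linarith [hw.1]), ramp_eq_zero hα hw.2, sub_zero, Pi.one_apply]

lemma bump_eq_zero (hα : 0 < α) {x w : ℝ} (hw : w ∉ Set.Icc (x - α) (x + 2 * α)) :
    bump α x w = 0 := by
  rw [Set.mem_Icc, not_and_or, not_le, not_le] at hw
  rcases hw with hw | hw
  · rw [bump, ramp_eq_zero hα hw.le, ramp_eq_zero hα (by linarith), sub_zero]
  · rw [bump, ramp_eq_one hα (by linarith), ramp_eq_one hα (by linarith), sub_self]

lemma bump_le_indicator_Icc (hα : 0 < α) (x w : ℝ) :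
    bump α x w ≤ (Set.Icc (x - α) (x + 2 * α)).indicator 1 w :=
  Set.le_indicator_apply (fun _ => bump_le_one α x w) fun hw => (bump_eq_zero hα hw).le

lemma setIntegral_bump_le (hα : 0 < α) (x : ℝ) (s : Set ℝ) :
    ∫ t in s, bump α x t ≤ volume.real (Set.Icc (x - α) (x + 2 * α) ∩ s) := by
  have hfin : (volume.restrict s) (Set.Icc (x - α) (x + 2 * α)) < ⊤ :=
    (Measure.restrict_apply_le s _).trans_lt measure_Icc_lt_top
  calc ∫ t in s, bump α x t ≤ ∫ t in s, (Set.Icc (x - α) (x + 2 * α)).indicator 1 t :=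
        integral_mono_of_nonneg (.of_forall fun t => bump_nonneg hα x t)
          ((integrable_indicator_iff measurableSet_Icc).2 (integrableOn_const hfin.ne))
          (.of_forall fun t => bump_le_indicator_Icc hα x t)
    _ = volume.real (Set.Icc (x - α) (x + 2 * α) ∩ s) := by
        rw [integral_indicator_one measurableSet_Icc, measureReal_restrict_apply measurableSet_Icc]

lemma bump_add_left (α x w t : ℝ) : bump α x (w + t) = bump α (x - w) t := by
  rw [bump, bump, ramp, ramp, ramp, ramp]
  ring_nf

lemma setIntegral_bump_sq_le (hα : 0 < α) (x w : ℝ) :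
    ∫ t in Set.Icc (-1 : ℝ) 1, bump α x (w + t) ^ 2 ≤ 3 * α := by
  have hint : IntegrableOn (bump α (x - w)) (Set.Icc (-1) 1) :=
    (continuous_bump _ _).continuousOn.integrableOn_Icc
  calc ∫ t in Set.Icc (-1 : ℝ) 1, bump α x (w + t) ^ 2
      ≤ ∫ t in Set.Icc (-1 : ℝ) 1, bump α (x - w) t := by
        refine integral_mono_of_nonneg (.of_forall fun t => sq_nonneg _) hint
          (.of_forall fun t => ?_)
        dsimp only
        rw [bump_add_left]
        exact pow_le_of_le_one (bump_nonneg hα _ t) (bump_le_one ..) two_ne_zero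
    _ ≤ volume.real (Set.Icc (x - w - α) (x - w + 2 * α)) :=
        (setIntegral_bump_le hα _ _).trans
          (measureReal_mono Set.inter_subset_left measure_Icc_lt_top.ne)
    _ = 3 * α := by
        rw [Real.volume_real_Icc_of_le (by linarith)]
        ring

/-- The primitive of `bump α x` vanishing at `x`. -/
noncomputable def bumpPrimitive (α x w : ℝ) : ℝ := ∫ t in x..w, bump α x t

lemma bumpPrimitive_sub (α x a b : ℝ) :
    bumpPrimitive α x b - bumpPrimitive α x a = ∫ t in a..b, bump α x t :=
  intervalIntegral.integral_interval_sub_left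
    ((continuous_bump α x).intervalIntegrable _ _) ((continuous_bump α x).intervalIntegrable _ _)

lemma abs_bumpPrimitive_sub_le (hα : 0 < α) (x a b : ℝ) :
    |bumpPrimitive α x b - bumpPrimitive α x a| ≤ |b - a| := by
  rw [bumpPrimitive_sub]
  simpa using intervalIntegral.norm_integral_le_of_norm_le_const (a := a) (b := b)
    (f := bump α x) (C := 1) fun t _ => abs_bump_le_one hα x t

lemma continuous_bumpPrimitive (α x : ℝ) : Continuous (bumpPrimitive α x) :=
  intervalIntegral.continuous_primitive (fun a b => (continuous_bump α x).intervalIntegrable a b) x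

lemma abs_bumpPrimitive_le (hα : 0 < α) (x w : ℝ) : |bumpPrimitive α x w| ≤ 2 * α := by
  have hint : |bumpPrimitive α x w| = ∫ t in Set.uIoc x w, bump α x t := by
    rw [bumpPrimitive, intervalIntegral.abs_intervalIntegral_eq,
      abs_of_nonneg (integral_nonneg (bump_nonneg hα x))]
  have hsub : ∃ a b : ℝ, Set.Icc (x - α) (x + 2 * α) ∩ Set.uIoc x w ⊆ Set.Icc a b ∧
      a ≤ b ∧ b - a ≤ 2 * α := by
    rcases le_total x w with h | h
    · refine ⟨x, x + 2 * α, fun t ht => ?_, by linarith, by linarith⟩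
      rw [Set.uIoc_of_le h] at ht
      exact ⟨ht.2.1.le, ht.1.2⟩
    · refine ⟨x - α, x, fun t ht => ?_, by linarith, by linarith⟩
      rw [Set.uIoc_of_ge h] at ht
      exact ⟨ht.1.1, ht.2.2⟩
  obtain ⟨a, b, hsub, hab, hlen⟩ := hsub
  calc |bumpPrimitive α x w| ≤ volume.real (Set.Icc (x - α) (x + 2 * α) ∩ Set.uIoc x w) :=
        hint.trans_le (setIntegral_bump_le hα x _)
    _ ≤ volume.real (Set.Icc a b) := measureReal_mono hsub measure_Icc_lt_top.ne
    _ ≤ 2 * α := by rwa [Real.volume_real_Icc_of_le hab]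

end Ramp

/-! ### Truncated increments as integrals -/

section IncrementKernel

/-- Lebesgue measure on `[-1, 1]`, the range of the shifts used to smooth out increments. -/
noncomputable abbrev windowMeasure : Measure ℝ := volume.restrict (Set.Icc (-1) 1)

/-- The signed indicator of the interval between `-y` and `0`, which represents the increment over
a step `y` as an integral: `∫ t, F' (w + t) * incrementKernel y t = F w - F (w - y)`. -/
noncomputable def incrementKernel (y t : ℝ) : ℝ :=
  (Set.Ioc (-y) 0).indicator 1 t - (Set.Ioc 0 (-y)).indicator 1 t

lemma measurable_incrementKernel :
    Measurable fun q : ℝ × ℝ => incrementKernel q.1 q.2 := by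
  have hleft : MeasurableSet {q : ℝ × ℝ | -q.1 < q.2 ∧ q.2 ≤ 0} :=
    (measurableSet_lt measurable_fst.neg measurable_snd).inter
      (measurableSet_le measurable_snd measurable_const)
  have hright : MeasurableSet {q : ℝ × ℝ | 0 < q.2 ∧ q.2 ≤ -q.1} :=
    (measurableSet_lt measurable_const measurable_snd).inter
      (measurableSet_le measurable_snd measurable_fst.neg)
  exact (measurable_one.indicator hleft).sub (measurable_one.indicator hright)

lemma abs_incrementKernel (y t : ℝ) :
    |incrementKernel y t| = (Set.uIoc (-y) 0).indicator 1 t := by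
  have habs (s : Set ℝ) : |s.indicator 1 t| = s.indicator (1 : ℝ → ℝ) t :=
    abs_of_nonneg (Set.indicator_nonneg (fun _ _ => zero_le_one) t)
  rcases le_total (-y) 0 with h | h
  · rw [incrementKernel, Set.Ioc_eq_empty_of_le h, Set.indicator_empty, Set.uIoc_of_le h,
      sub_zero, habs]
  · rw [incrementKernel, Set.Ioc_eq_empty_of_le h, Set.indicator_empty, Set.uIoc_of_ge h,
      zero_sub, abs_neg, habs]

lemma abs_incrementKernel_le_one (y t : ℝ) : |incrementKernel y t| ≤ 1 := by
  rw [abs_incrementKernel]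
  exact Set.indicator_le_self' (fun _ _ => zero_le_one) t

lemma incrementKernel_sq (y t : ℝ) : incrementKernel y t ^ 2 = |incrementKernel y t| := by
  rw [← sq_abs, abs_incrementKernel]
  by_cases h : t ∈ Set.uIoc (-y) 0 <;> simp [h]

lemma abs_incrementKernel_mul_abs_le (y t : ℝ) :
    |incrementKernel y t| * |t| ≤ |incrementKernel y t| * |y| := by
  rw [abs_incrementKernel]
  by_cases h : t ∈ Set.uIoc (-y) 0
  · have : |t| ≤ |y| := by simpa using Set.abs_sub_right_of_mem_uIcc (Set.uIoc_subset_uIcc h)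
    simpa [h] using this
  · simp [h]

variable {y : ℝ}

lemma integral_mul_incrementKernel (hy : |y| ≤ 1) {g : ℝ → ℝ} (hg : Continuous g) :
    ∫ t, g t * incrementKernel y t ∂windowMeasure = ∫ t in -y..0, g t := by
  obtain ⟨hl, hr⟩ := abs_le.1 hy
  have hmul (s : Set ℝ) (t : ℝ) : g t * s.indicator 1 t = s.indicator g t := by
    by_cases h : t ∈ s <;> simp [h]
  have hint : IntegrableOn g (Set.Icc (-1) 1) := hg.integrableOn_Icc
  have hleft : Set.Ioc (-y) 0 ⊆ Set.Icc (-1) 1 := fun t ht =>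
    ⟨by linarith [ht.1], by linarith [ht.2]⟩
  have hright : Set.Ioc 0 (-y) ⊆ Set.Icc (-1) 1 := fun t ht =>
    ⟨by linarith [ht.1], by linarith [ht.2]⟩
  simp_rw [incrementKernel, mul_sub, hmul]
  rw [integral_sub (hint.indicator measurableSet_Ioc) (hint.indicator measurableSet_Ioc),
    intervalIntegral, setIntegral_indicator measurableSet_Ioc,
    setIntegral_indicator measurableSet_Ioc, Set.inter_eq_right.2 hleft,
    Set.inter_eq_right.2 hright]

lemma integral_incrementKernel (hy : |y| ≤ 1) :
    ∫ t, incrementKernel y t ∂windowMeasure = y := by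
  simpa using integral_mul_incrementKernel hy (g := fun _ => 1) continuous_const

lemma integral_abs_incrementKernel (hy : |y| ≤ 1) :
    ∫ t, |incrementKernel y t| ∂windowMeasure = |y| := by
  have hsub : Set.uIoc (-y) 0 ⊆ Set.Icc (-1) 1 := fun t ht => by
    rw [Set.mem_uIoc] at ht
    grind
  simp_rw [abs_incrementKernel]
  rw [integral_indicator_one measurableSet_uIoc, measureReal_restrict_apply measurableSet_uIoc,
    Set.inter_eq_left.2 hsub, measureReal_def, Real.volume_uIoc, zero_sub, neg_neg,
    ENNReal.toReal_ofReal (abs_nonneg y)]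

lemma integral_bump_mul_incrementKernel (hy : |y| ≤ 1) (α x w : ℝ) :
    ∫ t, bump α x (w + t) * incrementKernel y t ∂windowMeasure =
      bumpPrimitive α x w - bumpPrimitive α x (w - y) := by
  rw [integral_mul_incrementKernel hy (g := fun t => bump α x (w + t))
    ((continuous_bump α x).comp (continuous_const_add w)),
    bumpPrimitive_sub, intervalIntegral.integral_comp_add_left, add_zero, sub_eq_add_neg]

end IncrementKernel

section Clamp

/-- Truncation of a real number to `[-1, 1]`. -/
noncomputable def clamp (y : ℝ) : ℝ := max (-1) (min 1 y)

lemma abs_clamp_le_one (y : ℝ) : |clamp y| ≤ 1 :=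
  abs_le.2 ⟨le_max_left _ _, max_le (by norm_num) (min_le_left _ _)⟩

lemma measurable_clamp : Measurable clamp := by
  unfold clamp; fun_prop

lemma clamp_eq_self {y : ℝ} (hy : |y| ≤ 1) : clamp y = y := by
  rw [clamp, min_eq_right (abs_le.1 hy).2, max_eq_right (abs_le.1 hy).1]

lemma abs_clamp_le_abs (y : ℝ) : |clamp y| ≤ |y| := by
  rcases le_total |y| 1 with h | h
  · rw [clamp_eq_self h]
  · exact (abs_clamp_le_one y).trans h

lemma abs_sub_clamp_le_abs (y : ℝ) : |y - clamp y| ≤ |y| := by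
  unfold clamp; grind

lemma abs_sub_clamp_le_rpow (y : ℝ) {q : ℝ} (hq : 1 ≤ q) : |y - clamp y| ≤ |y| ^ q := by
  rcases le_total |y| 1 with h | h
  · rw [clamp_eq_self h, sub_self, abs_zero]
    positivity
  · exact (abs_sub_clamp_le_abs y).trans (Real.self_le_rpow_of_one_le h hq)

lemma abs_clamp_le_rpow {y u q : ℝ} (h : |y| ≤ u) (hq₀ : 0 < q) (hq₁ : q ≤ 1) :
    |clamp y| ≤ u ^ q := by
  have hu : 0 ≤ u := (abs_nonneg y).trans h
  rcases le_total u 1 with hu₁ | hu₁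
  · exact ((abs_clamp_le_abs y).trans h).trans (Real.self_le_rpow_of_le_one hu hu₁ hq₁)
  · exact (abs_clamp_le_one y).trans (Real.one_le_rpow hu₁ hq₀.le)

end Clamp

/-! ### The Stein equation -/

section Gaussian

local notation "φ" => gaussianPDFReal 0 1
local notation "γ" => gaussianReal 0 1

lemma stdGaussianPDF_apply (x : ℝ) : φ x = (√(2 * π))⁻¹ * exp (-x ^ 2 / 2) := by
  simp [gaussianPDFReal]

lemma stdGaussianPDF_pos (x : ℝ) : 0 < φ x := gaussianPDFReal_pos 0 1 x one_ne_zero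

lemma stdGaussianPDF_neg (x : ℝ) : φ (-x) = φ x := by
  simp_rw [stdGaussianPDF_apply, neg_sq]

lemma stdGaussianPDF_le_half (x : ℝ) : φ x ≤ 1 / 2 := by
  have hsqrt : 2 ≤ √(2 * π) := Real.le_sqrt_of_sq_le (by linarith [Real.pi_gt_three])
  rw [stdGaussianPDF_apply, one_div]
  refine (mul_le_of_le_one_right (by positivity) (Real.exp_le_one_iff.2 ?_)).trans
    (inv_anti₀ two_pos hsqrt)
  linarith [sq_nonneg x]

lemma stdGaussianPDF_le_of_abs_le {x y : ℝ} (h : |x| ≤ |y|) : φ y ≤ φ x := by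
  rw [stdGaussianPDF_apply, stdGaussianPDF_apply]
  have := sq_le_sq.2 h
  gcongr

lemma hasDerivAt_stdGaussianPDF (x : ℝ) : HasDerivAt φ (-(x * φ x)) x := by
  have hexp : HasDerivAt (fun x : ℝ => -x ^ 2 / 2) (-x) x :=
    ((hasDerivAt_pow 2 x).neg.div_const 2).congr_deriv (by simp; ring)
  rw [funext stdGaussianPDF_apply]
  exact (hexp.exp.const_mul _).congr_deriv (by ring)

lemma continuous_stdGaussianPDF : Continuous φ :=
  continuous_iff_continuousAt.2 fun x => (hasDerivAt_stdGaussianPDF x).continuousAt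

lemma tendsto_stdGaussianPDF_atTop : Filter.Tendsto φ Filter.atTop (nhds 0) := by
  have hsq : Filter.Tendsto (fun x : ℝ => -x ^ 2 / 2) Filter.atTop Filter.atBot :=
    (Filter.tendsto_neg_atTop_atBot.comp
      (Filter.tendsto_pow_atTop two_ne_zero)).atBot_div_const two_pos
  rw [funext stdGaussianPDF_apply]
  simpa using (Real.tendsto_exp_atBot.comp hsq).const_mul (√(2 * π))⁻¹

lemma mul_integral_Ioi_stdGaussianPDF_le {w : ℝ} (hw : 0 ≤ w) :
    w * ∫ x in Set.Ioi w, φ x ≤ φ w := by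
  have hderiv (x : ℝ) : HasDerivAt (fun x => -φ x) (x * φ x) x :=
    (hasDerivAt_stdGaussianPDF x).neg.congr_deriv (neg_neg _)
  have htend : Filter.Tendsto (fun x => -φ x) Filter.atTop (nhds 0) := by
    simpa using tendsto_stdGaussianPDF_atTop.neg
  have hint : IntegrableOn (fun x => x * φ x) (Set.Ioi w) :=
    integrableOn_Ioi_deriv_of_nonneg' (fun x _ => hderiv x)
      (fun x hx => mul_nonneg (hw.trans (Set.mem_Ioi.1 hx).le) (stdGaussianPDF_pos x).le) htend
  calc w * ∫ x in Set.Ioi w, φ x = ∫ x in Set.Ioi w, w * φ x := (integral_const_mul _ _).symm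
    _ ≤ ∫ x in Set.Ioi w, x * φ x :=
        setIntegral_mono_on ((integrable_gaussianPDFReal 0 1).const_mul _).integrableOn hint
          measurableSet_Ioi fun x hx =>
            mul_le_mul_of_nonneg_right (Set.mem_Ioi.1 hx).le (stdGaussianPDF_pos x).le
    _ = φ w := by
        rw [integral_Ioi_of_hasDerivAt_of_tendsto' (fun x _ => hderiv x) hint htend, zero_sub,
          neg_neg]

lemma integral_Ioi_stdGaussianPDF_le {w : ℝ} (hw : 0 ≤ w) :
    ∫ x in Set.Ioi w, φ x ≤ 2 * φ w := by
  have hint (s : Set ℝ) : IntegrableOn φ s := (integrable_gaussianPDFReal 0 1).integrableOn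
  have hnear : ∫ x in Set.Ioc w (w + 1), φ x ≤ φ w := by
    have hle : ∀ x ∈ Set.Ioc w (w + 1), φ x ≤ φ w := fun x hx =>
      stdGaussianPDF_le_of_abs_le (abs_le_abs hx.1.le (by linarith [hx.1]))
    simpa using setIntegral_mono_on (hint _)
      (integrableOn_const measure_Ioc_lt_top.ne) measurableSet_Ioc hle
  have hfar : ∫ x in Set.Ioi (w + 1), φ x ≤ φ w := calc
    ∫ x in Set.Ioi (w + 1), φ x ≤ (w + 1) * ∫ x in Set.Ioi (w + 1), φ x :=
        le_mul_of_one_le_left (integral_nonneg fun x => (stdGaussianPDF_pos x).le) (by linarith)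
    _ ≤ φ (w + 1) := mul_integral_Ioi_stdGaussianPDF_le (by linarith)
    _ ≤ φ w := stdGaussianPDF_le_of_abs_le (abs_le_abs (by linarith) (by linarith))
  rw [← Set.Ioc_union_Ioi_eq_Ioi (show w ≤ w + 1 by linarith),
    setIntegral_union Set.Ioc_disjoint_Ioi_same measurableSet_Ioi (hint _) (hint _)]
  linarith

lemma stdGaussianCDF_eq (z : ℝ) : stdGaussianCDF z = (γ).real (Set.Iic z) := by
  rw [measureReal_def, gaussianReal_apply_eq_integral 0 one_ne_zero,
    ENNReal.toReal_ofReal (integral_nonneg fun x => (stdGaussianPDF_pos x).le), stdGaussianCDF]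
  simp_rw [stdGaussianPDF_apply]

lemma stdGaussianCDF_add_sub_le (z : ℝ) {α : ℝ} (hα : 0 ≤ α) :
    stdGaussianCDF (z + α) - stdGaussianCDF z ≤ α / 2 := by
  have hint (s : Set ℝ) : IntegrableOn φ s := (integrable_gaussianPDFReal 0 1).integrableOn
  simp_rw [stdGaussianCDF, ← stdGaussianPDF_apply]
  rw [intervalIntegral.integral_Iic_sub_Iic (hint _) (hint _)]
  refine (intervalIntegral.integral_mono_on (by linarith)
    (continuous_stdGaussianPDF.intervalIntegrable _ _) intervalIntegrable_const
    fun x _ => stdGaussianPDF_le_half x).trans_eq ?_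
  rw [intervalIntegral.integral_const, add_sub_cancel_left, smul_eq_mul, mul_one_div]

/-- The test functions `h` for which the Stein equation is solved: continuous, with values in
`[0, 1]`. -/
structure SteinTest (h : ℝ → ℝ) : Prop where
  continuous : Continuous h
  nonneg : ∀ x, 0 ≤ h x
  le_one : ∀ x, h x ≤ 1

/-- The bounded solution of the Stein equation `f' w - w * f w = h w - ∫ h dγ`, where `γ` is the
standard Gaussian measure. -/
noncomputable def steinSol (h : ℝ → ℝ) (w : ℝ) : ℝ :=
  (φ w)⁻¹ * ∫ x in Set.Iic w, (h x - ∫ y, h y ∂γ) * φ x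

/-- The derivative of `steinSol h`, as given by the Stein equation. -/
noncomputable def steinDeriv (h : ℝ → ℝ) (w : ℝ) : ℝ :=
  w * steinSol h w + (h w - ∫ y, h y ∂γ)

namespace SteinTest

variable {h : ℝ → ℝ} (H : SteinTest h)
include H

lemma abs_le_one (x : ℝ) : |h x| ≤ 1 := by
  rw [abs_of_nonneg (H.nonneg x)]
  exact H.le_one x

lemma integrable (ν : Measure ℝ) [IsFiniteMeasure ν] : Integrable h ν :=
  .of_bound H.continuous.aestronglyMeasurable 1 (.of_forall H.abs_le_one)

lemma abs_sub_integral_le_one (x : ℝ) : |h x - ∫ y, h y ∂γ| ≤ 1 := by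
  have hnonneg : 0 ≤ ∫ y, h y ∂γ := integral_nonneg H.nonneg
  have hle : ∫ y, h y ∂γ ≤ 1 := by
    simpa using integral_mono (H.integrable γ) (integrable_const 1) H.le_one
  rw [abs_le]
  constructor <;> linarith [H.nonneg x, H.le_one x]

lemma integrable_centered_mul : Integrable fun x => (h x - ∫ y, h y ∂γ) * φ x :=
  (integrable_gaussianPDFReal 0 1).bdd_mul
    (H.continuous.sub continuous_const).aestronglyMeasurable (.of_forall H.abs_sub_integral_le_one)

lemma integral_centered_mul : ∫ x, (h x - ∫ y, h y ∂γ) * φ x = 0 := by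
  have hγ := integral_gaussianReal_eq_integral_smul (μ := 0) (v := 1) one_ne_zero
    (f := fun x => h x - ∫ y, h y ∂γ)
  simp_rw [smul_eq_mul, mul_comm (φ _)] at hγ
  rw [← hγ, integral_sub (H.integrable γ) (integrable_const _)]
  simp

lemma stdGaussianPDF_mul_abs_steinSol_le (w : ℝ) :
    φ w * |steinSol h w| ≤ ∫ x in Set.Ioi |w|, φ x := by
  have htail (q : ℝ → ℝ) (hq : ∀ x, |q x| ≤ 1) :
      |∫ x in Set.Ioi |w|, q x * φ x| ≤ ∫ x in Set.Ioi |w|, φ x := by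
    rw [← Real.norm_eq_abs]
    refine norm_integral_le_of_norm_le (integrable_gaussianPDFReal 0 1).integrableOn
      (.of_forall fun x => ?_)
    rw [norm_mul, Real.norm_of_nonneg (stdGaussianPDF_pos x).le]
    exact mul_le_of_le_one_left (stdGaussianPDF_pos x).le (hq x)
  have hsol : φ w * |steinSol h w| = |∫ x in Set.Iic w, (h x - ∫ y, h y ∂γ) * φ x| := by
    rw [steinSol, abs_mul, abs_of_pos (inv_pos.2 (stdGaussianPDF_pos w)),
      mul_inv_cancel_left₀ (stdGaussianPDF_pos w).ne']
  rw [hsol]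
  rcases le_total 0 w with hw | hw
  · have hcompl := integral_add_compl (measurableSet_Iic (a := w)) H.integrable_centered_mul
    rw [H.integral_centered_mul, Set.compl_Iic] at hcompl
    rw [eq_neg_of_add_eq_zero_left hcompl, abs_neg]
    simpa only [abs_of_nonneg hw] using htail _ H.abs_sub_integral_le_one
  · have hrefl := integral_comp_neg_Ioi (-w) fun x => (h x - ∫ y, h y ∂γ) * φ x
    simp_rw [neg_neg, stdGaussianPDF_neg] at hrefl
    rw [← hrefl]
    simpa only [abs_of_nonpos hw] using htail _ fun x => H.abs_sub_integral_le_one (-x)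

lemma abs_steinSol_le (w : ℝ) : |steinSol h w| ≤ 2 := by
  have hle := (H.stdGaussianPDF_mul_abs_steinSol_le w).trans
    (integral_Ioi_stdGaussianPDF_le (abs_nonneg w))
  have habs : φ |w| ≤ φ w := stdGaussianPDF_le_of_abs_le (abs_abs w).ge
  exact le_of_mul_le_mul_left (by linarith) (stdGaussianPDF_pos w)

lemma abs_mul_steinSol_le (w : ℝ) : |w * steinSol h w| ≤ 1 := by
  refine le_of_mul_le_mul_left ?_ (stdGaussianPDF_pos w)
  calc φ w * |w * steinSol h w| = |w| * (φ w * |steinSol h w|) := by rw [abs_mul]; ring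
    _ ≤ |w| * ∫ x in Set.Ioi |w|, φ x :=
        mul_le_mul_of_nonneg_left (H.stdGaussianPDF_mul_abs_steinSol_le w) (abs_nonneg w)
    _ ≤ φ |w| := mul_integral_Ioi_stdGaussianPDF_le (abs_nonneg w)
    _ ≤ φ w * 1 := (stdGaussianPDF_le_of_abs_le (abs_abs w).ge).trans_eq (mul_one _).symm

lemma abs_steinDeriv_le (w : ℝ) : |steinDeriv h w| ≤ 2 := by
  refine (abs_add_le _ _).trans ?_
  linarith [H.abs_mul_steinSol_le w, H.abs_sub_integral_le_one w]

lemma hasDerivAt_steinSol (w : ℝ) : HasDerivAt (steinSol h) (steinDeriv h w) w := by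
  set c := ∫ y, h y ∂γ with hc
  have hcont : Continuous fun x => (h x - c) * φ x :=
    (H.continuous.sub continuous_const).mul continuous_stdGaussianPDF
  have hprim : HasDerivAt (fun w => ∫ x in Set.Iic w, (h x - c) * φ x) ((h w - c) * φ w) w := by
    have heq (v : ℝ) : ∫ x in Set.Iic v, (h x - c) * φ x =
        (∫ x in Set.Iic 0, (h x - c) * φ x) + ∫ x in (0 : ℝ)..v, (h x - c) * φ x := by
      rw [← intervalIntegral.integral_Iic_sub_Iic H.integrable_centered_mul.integrableOn
        H.integrable_centered_mul.integrableOn, add_sub_cancel]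
    rw [funext heq]
    exact (hcont.integral_hasStrictDerivAt 0 w).hasDerivAt.const_add _
  have hφ := (stdGaussianPDF_pos w).ne'
  refine (((hasDerivAt_stdGaussianPDF w).inv hφ).mul hprim).congr_deriv ?_
  simp only [steinDeriv, steinSol, ← hc, Pi.inv_apply]
  field_simp

lemma continuous_steinSol : Continuous (steinSol h) :=
  continuous_iff_continuousAt.2 fun w => (H.hasDerivAt_steinSol w).continuousAt

lemma continuous_steinDeriv : Continuous (steinDeriv h) :=
  (continuous_id.mul H.continuous_steinSol).add (H.continuous.sub continuous_const)

lemma abs_steinSol_sub_le (a b : ℝ) : |steinSol h b - steinSol h a| ≤ 2 * |b - a| :=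
  convex_univ.norm_image_sub_le_of_norm_hasDerivWithin_le
    (fun x _ => (H.hasDerivAt_steinSol x).hasDerivWithinAt) (fun x _ => H.abs_steinDeriv_le x)
    (Set.mem_univ _) (Set.mem_univ _)

lemma abs_mul_steinSol_sub_le (w s : ℝ) :
    |(w + s) * steinSol h (w + s) - w * steinSol h w| ≤ min 2 (|s| * (2 + 2 * |w|)) := by
  refine le_min ?_ ?_
  · linarith [abs_sub ((w + s) * steinSol h (w + s)) (w * steinSol h w),
      H.abs_mul_steinSol_le w, H.abs_mul_steinSol_le (w + s)]
  · calc |(w + s) * steinSol h (w + s) - w * steinSol h w|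
        = |s * steinSol h (w + s) + w * (steinSol h (w + s) - steinSol h w)| := by ring_nf
      _ ≤ |s| * |steinSol h (w + s)| + |w| * |steinSol h (w + s) - steinSol h w| := by
          rw [← abs_mul, ← abs_mul]
          exact abs_add_le _ _
      _ ≤ |s| * 2 + |w| * (2 * |w + s - w|) := by
          gcongr
          · exact H.abs_steinSol_le _
          · exact H.abs_steinSol_sub_le _ _
      _ = |s| * (2 + 2 * |w|) := by rw [add_sub_cancel_left]; ring

lemma abs_steinSol_sub_sub_mul_le {w y D r : ℝ} (hy : |y| ≤ r)
    (hD : ∀ s, |s| ≤ r → |steinDeriv h (w + s) - steinDeriv h w| ≤ D) :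
    |steinSol h w - steinSol h (w - y) - y * steinDeriv h w| ≤ |y| * D := by
  have hmvt := (convex_closedBall w r).norm_image_sub_le_of_norm_hasDerivWithin_le
    (f := fun x => steinSol h x - x * steinDeriv h w)
    (f' := fun x => steinDeriv h x - 1 * steinDeriv h w) (C := D) (x := w - y) (y := w)
    (fun x _ => ((H.hasDerivAt_steinSol x).sub
      ((hasDerivAt_id x).mul_const (steinDeriv h w))).hasDerivWithinAt)
    (fun x hx => by
      simpa using hD (x - w) (by simpa [Real.dist_eq] using hx))
    (by simpa [Real.dist_eq] using hy) (by simpa using (abs_nonneg y).trans hy)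
  rw [Real.norm_eq_abs, Real.norm_eq_abs, sub_sub_cancel, mul_comm D] at hmvt
  convert hmvt using 2
  ring

end SteinTest

end Gaussian

section SmoothIndicator

/-- The continuous approximation of the indicator of `(-∞, z]` that decreases from `1` to `0` on
`[z, z + α]`. -/
noncomputable def smoothIndicator (α z w : ℝ) : ℝ := 1 - ramp α z w

lemma steinTest_smoothIndicator (α z : ℝ) : SteinTest (smoothIndicator α z) where
  continuous := continuous_const.sub (continuous_ramp α z)
  nonneg x := sub_nonneg.2 (ramp_le_one α z x)
  le_one x := sub_le_self _ (ramp_nonneg α z x)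

variable {α : ℝ} (ν : Measure ℝ) [IsFiniteMeasure ν]

lemma measureReal_Iic_le_integral_smoothIndicator (hα : 0 < α) (z : ℝ) :
    ν.real (Set.Iic z) ≤ ∫ w, smoothIndicator α z w ∂ν := by
  rw [← integral_indicator_one measurableSet_Iic]
  refine integral_mono ((integrable_const 1).indicator measurableSet_Iic)
    ((steinTest_smoothIndicator α z).integrable ν) fun w => ?_
  refine Set.indicator_apply_le' (fun hw => ?_) fun _ => (steinTest_smoothIndicator α z).nonneg w
  rw [smoothIndicator, ramp_eq_zero hα hw, sub_zero, Pi.one_apply]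

lemma integral_smoothIndicator_le_measureReal_Iic (hα : 0 < α) (z : ℝ) :
    ∫ w, smoothIndicator α z w ∂ν ≤ ν.real (Set.Iic (z + α)) := by
  rw [← integral_indicator_one measurableSet_Iic]
  refine integral_mono ((steinTest_smoothIndicator α z).integrable ν)
    ((integrable_const 1).indicator measurableSet_Iic) fun w => ?_
  refine Set.le_indicator_apply (fun _ => (steinTest_smoothIndicator α z).le_one w) fun hw => ?_
  rw [smoothIndicator, ramp_eq_one hα (not_le.1 hw).le, sub_self]

lemma abs_measureReal_Iic_sub_stdGaussianCDF_le (hα : 0 < α) {ε : ℝ}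
    (hν : ∀ z, |∫ w, smoothIndicator α z w ∂ν - ∫ w, smoothIndicator α z w ∂gaussianReal 0 1| ≤ ε)
    (z : ℝ) : |ν.real (Set.Iic z) - stdGaussianCDF z| ≤ ε + α / 2 := by
  have hupper := measureReal_Iic_le_integral_smoothIndicator ν hα z
  have hlower := integral_smoothIndicator_le_measureReal_Iic ν hα (z - α)
  have hupperγ := integral_smoothIndicator_le_measureReal_Iic (gaussianReal 0 1) hα z
  have hlowerγ := measureReal_Iic_le_integral_smoothIndicator (gaussianReal 0 1) hα (z - α)
  have hlip := stdGaussianCDF_add_sub_le z hα.le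
  have hlip' := stdGaussianCDF_add_sub_le (z - α) hα.le
  rw [sub_add_cancel] at hlower hlip'
  rw [← stdGaussianCDF_eq] at hupperγ hlowerγ
  rw [abs_le]
  constructor <;> linarith [abs_le.1 (hν z), abs_le.1 (hν (z - α))]

end SmoothIndicator

/-! ### Blocks of variables -/

section Blocks

variable {Ω ι : Type*}

/-- The σ-algebra generated by the variables `X k`, `k ∈ T`. -/
@[reducible] def blockSigma (X : ι → Ω → ℝ) (T : Finset ι) : MeasurableSpace Ω :=
  MeasurableSpace.comap (fun ω (j : T) => X j.1 ω) inferInstance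

/-- The partial sum `∑ k ∈ T, X k`; the normalised sum `W` is `blockSum X Finset.univ`. -/
def blockSum (X : ι → Ω → ℝ) (T : Finset ι) (ω : Ω) : ℝ := ∑ k ∈ T, X k ω

/-- The partial sum `∑ k ∈ T, |X k|` of absolute values, which dominates `|blockSum X T'|` for
every `T' ⊆ T`. -/
def blockAbsSum (X : ι → Ω → ℝ) (T : Finset ι) (ω : Ω) : ℝ := ∑ k ∈ T, |X k ω|

variable {X : ι → Ω → ℝ} {S T : Finset ι}

lemma measurable_blockSigma (X : ι → Ω → ℝ) {k : ι} (hk : k ∈ T) :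
    Measurable[blockSigma X T] (X k) :=
  (measurable_pi_apply (⟨k, hk⟩ : T)).comp (comap_measurable fun ω (j : T) => X j.1 ω)

lemma blockSigma_mono (X : ι → Ω → ℝ) (h : S ⊆ T) : blockSigma X S ≤ blockSigma X T :=
  (@measurable_pi_lambda _ _ _ (blockSigma X T) _ (fun ω (j : S) => X j.1 ω)
    fun j => measurable_blockSigma X (h j.2)).comap_le

lemma measurable_blockSum_blockSigma (X : ι → Ω → ℝ) (h : S ⊆ T) :
    Measurable[blockSigma X T] (blockSum X S) :=
  @Finset.measurable_fun_sum _ _ _ _ _ _ (blockSigma X T) _ S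
    fun _ hi => measurable_blockSigma X (h hi)

lemma measurable_blockAbsSum_blockSigma (X : ι → Ω → ℝ) (h : S ⊆ T) :
    Measurable[blockSigma X T] (blockAbsSum X S) :=
  @Finset.measurable_fun_sum _ _ _ _ _ _ (blockSigma X T) _ S
    fun _ hi => measurable_abs.comp (measurable_blockSigma X (h hi))

lemma blockAbsSum_nonneg (X : ι → Ω → ℝ) (T : Finset ι) (ω : Ω) : 0 ≤ blockAbsSum X T ω :=
  Finset.sum_nonneg fun _ _ => abs_nonneg _

lemma abs_blockSum_le_blockAbsSum (X : ι → Ω → ℝ) (h : S ⊆ T) (ω : Ω) :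
    |blockSum X S ω| ≤ blockAbsSum X T ω :=
  (Finset.abs_sum_le_sum_abs _ _).trans
    (Finset.sum_le_sum_of_subset_of_nonneg h fun _ _ _ => abs_nonneg _)

lemma blockAbsSum_mono (X : ι → Ω → ℝ) (h : S ⊆ T) (ω : Ω) :
    blockAbsSum X S ω ≤ blockAbsSum X T ω :=
  Finset.sum_le_sum_of_subset_of_nonneg h fun _ _ _ => abs_nonneg _

lemma blockSum_add_blockSum_compl [Fintype ι] [DecidableEq ι] (X : ι → Ω → ℝ) (T : Finset ι)
    (ω : Ω) : blockSum X T ω + blockSum X Tᶜ ω = blockSum X Finset.univ ω :=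
  Finset.sum_add_sum_compl T _

variable [mΩ : MeasurableSpace Ω] {μ : Measure Ω}

lemma blockSigma_le (hX : ∀ i, Measurable (X i)) (T : Finset ι) : blockSigma X T ≤ mΩ :=
  (measurable_pi_lambda (fun ω (j : T) => X j.1 ω) fun j => hX j.1).comap_le

lemma measurable_blockSum (hX : ∀ i, Measurable (X i)) (T : Finset ι) :
    Measurable (blockSum X T) :=
  Finset.measurable_fun_sum T fun i _ => hX i

lemma measurable_blockAbsSum (hX : ∀ i, Measurable (X i)) (T : Finset ι) :
    Measurable (blockAbsSum X T) :=
  Finset.measurable_fun_sum T fun i _ => (hX i).abs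

lemma indepFun_of_indep {m₁ m₂ : MeasurableSpace Ω} (h : Indep m₁ m₂ μ)
    {f g : Ω → ℝ} (hf : Measurable[m₁] f) (hg : Measurable[m₂] g) : IndepFun f g μ :=
  (IndepFun_iff_Indep f g μ).2 <|
    indep_of_indep_of_le_left (indep_of_indep_of_le_right h hg.comap_le) hf.comap_le

lemma integrable_blockAbsSum_rpow {p : ℝ} (hp : 1 ≤ p) (hX : ∀ i, Measurable (X i))
    (hXp : ∀ i, Integrable (fun ω => |X i ω| ^ p) μ) (T : Finset ι) :
    Integrable (fun ω => blockAbsSum X T ω ^ p) μ := by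
  refine ((integrable_finsetSum T fun k _ => hXp k).const_mul ((T.card : ℝ) ^ (p - 1))).mono'
    ((measurable_blockAbsSum hX T).pow_const p).aestronglyMeasurable (ae_of_all _ fun ω => ?_)
  rw [norm_of_nonneg (rpow_nonneg (blockAbsSum_nonneg X T ω) _)]
  exact rpow_sum_le_const_mul_sum_rpow T (fun k => X k ω) hp

lemma integral_blockAbsSum_rpow_le {p : ℝ} (hp : 1 ≤ p) (hX : ∀ i, Measurable (X i))
    (hXp : ∀ i, Integrable (fun ω => |X i ω| ^ p) μ) (T : Finset ι) :
    ∫ ω, blockAbsSum X T ω ^ p ∂μ ≤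
      (T.card : ℝ) ^ (p - 1) * ∑ k ∈ T, ∫ ω, |X k ω| ^ p ∂μ := by
  rw [← integral_finsetSum T fun k _ => hXp k, ← integral_const_mul]
  exact integral_mono (integrable_blockAbsSum_rpow hp hX hXp T)
    ((integrable_finsetSum T fun k _ => hXp k).const_mul _)
    fun ω => rpow_sum_le_const_mul_sum_rpow T (fun k => X k ω) hp

end Blocks

/-! ### Moment inequalities -/

section Moments

variable {Ω : Type*} [MeasurableSpace Ω] {μ : Measure Ω} {p : ℝ}

lemma mul_mul_rpow_sub_two_le {a u v : ℝ} (hp : 2 ≤ p) (ha : 0 ≤ a) (hu : 0 ≤ u) (hv : 0 ≤ v) :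
    a * u * v ^ (p - 2) ≤ (a ^ p + u ^ p + (p - 2) * v ^ p) / p := by
  have hp0 : 0 < p := by linarith
  have young := geom_mean_le_arith_mean3_weighted (w₁ := 1 / p) (w₂ := 1 / p)
    (w₃ := (p - 2) / p) (p₁ := a ^ p) (p₂ := u ^ p) (p₃ := v ^ p) (by positivity) (by positivity)
    (div_nonneg (by linarith) hp0.le) (by positivity) (by positivity) (by positivity)
    (by field_simp; ring)
  rw [← rpow_mul ha, ← rpow_mul hu, ← rpow_mul hv, mul_one_div_cancel hp0.ne',
    mul_div_cancel₀ _ hp0.ne', rpow_one, rpow_one] at young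
  exact young.trans_eq (by field_simp)

lemma sq_le_add_mul_rpow {y : ℝ} (hp : 2 ≤ p) (hy : 0 ≤ y) :
    y ^ 2 ≤ (1 - 2 / p) + 2 / p * y ^ p := by
  have young := mul_mul_rpow_sub_two_le hp hy hy zero_le_one
  rw [one_rpow, one_rpow, mul_one] at young
  calc y ^ 2 = y * y := sq y
    _ ≤ (y ^ p + y ^ p + (p - 2) * 1) / p := young
    _ = (1 - 2 / p) + 2 / p * y ^ p := by field_simp; ring

variable {a u v : Ω → ℝ}

lemma integrable_mul_mul_rpow_sub_two (hp : 2 ≤ p) (ma : Measurable a) (mu : Measurable u)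
    (mv : Measurable v) (ha : 0 ≤ a) (hu : 0 ≤ u) (hv : 0 ≤ v)
    (ia : Integrable (fun ω => a ω ^ p) μ) (iu : Integrable (fun ω => u ω ^ p) μ)
    (iv : Integrable (fun ω => v ω ^ p) μ) :
    Integrable (fun ω => a ω * u ω * v ω ^ (p - 2)) μ := by
  refine (((ia.fun_add iu).fun_add (iv.const_mul (p - 2))).div_const p).mono' (by fun_prop)
    (ae_of_all _ fun ω => ?_)
  rw [norm_of_nonneg (mul_nonneg (mul_nonneg (ha ω) (hu ω)) (rpow_nonneg (hv ω) _))]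
  exact mul_mul_rpow_sub_two_le hp (ha ω) (hu ω) (hv ω)

lemma integral_mul_mul_rpow_sub_two_le (hp : 2 ≤ p) (ma : Measurable a) (mu : Measurable u)
    (mv : Measurable v) (ha : 0 ≤ a) (hu : 0 ≤ u) (hv : 0 ≤ v)
    (ia : Integrable (fun ω => a ω ^ p) μ) (iu : Integrable (fun ω => u ω ^ p) μ)
    (iv : Integrable (fun ω => v ω ^ p) μ) :
    ∫ ω, a ω * u ω * v ω ^ (p - 2) ∂μ ≤
      (∫ ω, a ω ^ p ∂μ + ∫ ω, u ω ^ p ∂μ + (p - 2) * ∫ ω, v ω ^ p ∂μ) / p := by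
  rw [← integral_const_mul, ← integral_add ia iu, ← integral_add (ia.fun_add iu) (iv.const_mul _),
    ← integral_div]
  exact integral_mono (integrable_mul_mul_rpow_sub_two hp ma mu mv ha hu hv ia iu iv)
    (((ia.fun_add iu).fun_add (iv.const_mul (p - 2))).div_const p)
    fun ω => mul_mul_rpow_sub_two_le hp (ha ω) (hu ω) (hv ω)

section Probability

variable [IsProbabilityMeasure μ]

lemma integrable_mul_of_integrable_rpow (hp : 2 ≤ p) (ma : Measurable a) (mu : Measurable u)
    (ha : 0 ≤ a) (hu : 0 ≤ u) (ia : Integrable (fun ω => a ω ^ p) μ)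
    (iu : Integrable (fun ω => u ω ^ p) μ) : Integrable (fun ω => a ω * u ω) μ := by
  simpa only [one_rpow, mul_one] using
    integrable_mul_mul_rpow_sub_two hp ma mu (measurable_const (a := (1 : ℝ))) ha hu
      (fun _ => zero_le_one) ia iu (by simp)

lemma integrable_rpow_sub_two (hp : 2 ≤ p) (mv : Measurable v) (hv : 0 ≤ v)
    (iv : Integrable (fun ω => v ω ^ p) μ) : Integrable (fun ω => v ω ^ (p - 2)) μ := by
  simpa only [one_mul] using
    integrable_mul_mul_rpow_sub_two hp (measurable_const (a := (1 : ℝ)))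
      (measurable_const (a := (1 : ℝ))) mv (fun _ => zero_le_one) (fun _ => zero_le_one) hv
      (by simp) (by simp) iv

/- For fixed `ω`, apply the integrated Young inequality to the constants `a ω`, `u ω`, then
integrate over `ω`. -/
lemma integral_mul_mul_integral_rpow_sub_two_le (hp : 2 ≤ p) (ma : Measurable a)
    (mu : Measurable u) (mv : Measurable v) (ha : 0 ≤ a) (hu : 0 ≤ u) (hv : 0 ≤ v)
    (ia : Integrable (fun ω => a ω ^ p) μ) (iu : Integrable (fun ω => u ω ^ p) μ)
    (iv : Integrable (fun ω => v ω ^ p) μ) :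
    (∫ ω, a ω * u ω ∂μ) * ∫ ω, v ω ^ (p - 2) ∂μ ≤
      (∫ ω, a ω ^ p ∂μ + ∫ ω, u ω ^ p ∂μ + (p - 2) * ∫ ω, v ω ^ p ∂μ) / p := by
  have young_at : ∀ ω, (a ω * u ω) * ∫ ω', v ω' ^ (p - 2) ∂μ ≤
      (a ω ^ p + u ω ^ p + (p - 2) * ∫ ω', v ω' ^ p ∂μ) / p := by
    intro ω
    have := integral_mul_mul_rpow_sub_two_le (μ := μ) hp (measurable_const (a := a ω))
      (measurable_const (a := u ω)) mv (fun _ => ha ω) (fun _ => hu ω) hv (by simp) (by simp) iv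
    simpa [integral_const_mul] using this
  calc (∫ ω, a ω * u ω ∂μ) * ∫ ω, v ω ^ (p - 2) ∂μ
      = ∫ ω, (a ω * u ω) * ∫ ω', v ω' ^ (p - 2) ∂μ ∂μ := (integral_mul_const _ _).symm
    _ ≤ ∫ ω, (a ω ^ p + u ω ^ p + (p - 2) * ∫ ω', v ω' ^ p ∂μ) / p ∂μ :=
        integral_mono ((integrable_mul_of_integrable_rpow hp ma mu ha hu ia iu).mul_const _)
          (((ia.fun_add iu).fun_add (integrable_const _)).div_const _) young_at
    _ = _ := by
        rw [integral_div, integral_add (ia.fun_add iu) (integrable_const _), integral_add ia iu,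
          integral_const, probReal_univ, one_smul]

lemma integral_abs_le_of_integral_sq_le {f : Ω → ℝ} (hf : MemLp f 2 μ) {c : ℝ} (hc : 0 ≤ c)
    (h : ∫ ω, f ω ^ 2 ∂μ ≤ c ^ 2) : ∫ ω, |f ω| ∂μ ≤ c := by
  have hvar := variance_nonneg (fun ω => |f ω|) μ
  rw [variance_eq_sub (X := fun ω => |f ω|) hf.abs] at hvar
  simp only [Pi.pow_apply, sq_abs] at hvar
  exact le_of_sq_le_sq (by linarith) hc

end Probability

lemma sum_le_of_forall_le_weighted_mean {ι : Type*} (s : Finset ι) {f α β η : ι → ℝ} {c : ℝ}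
    (hp : 2 ≤ p) (h : ∀ j ∈ s, f j ≤ (α j + β j + (p - 2) * η j) / p) (hα : ∑ j ∈ s, α j ≤ c)
    (hβ : ∑ j ∈ s, β j ≤ c) (hη : ∑ j ∈ s, η j ≤ c) : ∑ j ∈ s, f j ≤ c := by
  have hp0 : 0 < p := by linarith
  have hη' : (p - 2) * ∑ j ∈ s, η j ≤ (p - 2) * c :=
    mul_le_mul_of_nonneg_left hη (by linarith)
  calc ∑ j ∈ s, f j ≤ ∑ j ∈ s, (α j + β j + (p - 2) * η j) / p := Finset.sum_le_sum h
    _ = (∑ j ∈ s, α j + ∑ j ∈ s, β j + (p - 2) * ∑ j ∈ s, η j) / p := by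
        rw [← Finset.sum_div, Finset.sum_add_distrib, Finset.sum_add_distrib, Finset.mul_sum]
    _ ≤ c := by rw [div_le_iff₀ hp0]; linarith

end Moments

/-! ### Local dependence -/

/-- Condition (LD3) for centred variables `X i`, with neighbourhoods `A i ⊆ B i ⊆ C i`;
independence is expressed through the σ-algebras generated by the blocks. -/
structure LocalDependence {Ω ι : Type*} [MeasurableSpace Ω] [Fintype ι] [DecidableEq ι]
    (μ : Measure Ω) (X : ι → Ω → ℝ) (A B C : ι → Finset ι) : Prop where
  measurable : ∀ i, Measurable (X i)
  integral_eq_zero : ∀ i, ∫ ω, X i ω ∂μ = 0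
  mem_A : ∀ i, i ∈ A i
  A_subset_B : ∀ i, A i ⊆ B i
  B_subset_C : ∀ i, B i ⊆ C i
  indep_A : ∀ i, Indep (MeasurableSpace.comap (X i) inferInstance) (blockSigma X (A i)ᶜ) μ
  indep_B : ∀ i, Indep (blockSigma X (A i)) (blockSigma X (B i)ᶜ) μ
  indep_C : ∀ i, Indep (blockSigma X (B i)) (blockSigma X (C i)ᶜ) μ

/-- The set `N(C_i)` of indices `j` whose neighbourhood `B j` meets `C i`. -/
def neighbors {ι : Type*} [Fintype ι] [DecidableEq ι] (B C : ι → Finset ι) (i : ι) : Finset ι :=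
  Finset.univ.filter fun j => (C i ∩ B j).Nonempty

lemma subset_compl_of_mem_compl_neighbors {ι : Type*} [Fintype ι] [DecidableEq ι]
    {B C : ι → Finset ι} {i j : ι} (hj : j ∈ (neighbors B C i)ᶜ) : B j ⊆ (C i)ᶜ := by
  rw [Finset.subset_compl_iff_disjoint_left, Finset.disjoint_iff_inter_eq_empty]
  simpa [neighbors] using hj

/-- The setting of the theorem: locally dependent variables with `p`-th moments whose sum has
variance one, together with the two cardinality bounds by `κ`. The number `b` is an upper bound
for `κ ^ (p - 1) * ∑ E |X i| ^ p`; only `b ≤ 1 / 75` is of interest, since otherwise the claimed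
estimate is trivial. -/
structure NormalizedLocalDependence {Ω ι : Type*} [MeasurableSpace Ω] [Fintype ι] [DecidableEq ι]
    (μ : Measure Ω) (X : ι → Ω → ℝ) (A B C : ι → Finset ι) (p : ℝ) (κ : ℕ) (b : ℝ) : Prop
    extends LocalDependence μ X A B C where
  two_lt : 2 < p
  le_three : p ≤ 3
  integrable_abs_rpow : ∀ i, Integrable (fun ω => |X i ω| ^ p) μ
  integral_sq_eq_one : ∫ ω, blockSum X Finset.univ ω ^ 2 ∂μ = 1
  card_neighbors_le : ∀ i, (neighbors B C i).card ≤ κ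
  card_mem_le : ∀ i, (Finset.univ.filter fun j => i ∈ C j).card ≤ κ
  moment_le : (κ : ℝ) ^ (p - 1) * ∑ i, ∫ ω, |X i ω| ^ p ∂μ ≤ b
  b_le : b ≤ 1 / 75

namespace LocalDependence

variable {Ω ι : Type*} [MeasurableSpace Ω] [Fintype ι] [DecidableEq ι] {μ : Measure Ω}
  {X : ι → Ω → ℝ} {A B C : ι → Finset ι}

lemma mem_C (H : LocalDependence μ X A B C) (i : ι) : i ∈ C i :=
  H.B_subset_C i (H.A_subset_B i (H.mem_A i))

lemma A_subset_C (H : LocalDependence μ X A B C) (i : ι) : A i ⊆ C i :=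
  (H.A_subset_B i).trans (H.B_subset_C i)

lemma integral_mul_eq_zero (H : LocalDependence μ X A B C) (j : ι) {g : Ω → ℝ}
    (hg : Measurable[blockSigma X (A j)ᶜ] g) : ∫ ω, X j ω * g ω ∂μ = 0 := by
  have hind : IndepFun (X j) g μ :=
    indepFun_of_indep (H.indep_A j) (comap_measurable _) hg
  rw [hind.integral_fun_mul_eq_mul_integral (H.measurable j).aestronglyMeasurable
    (hg.mono (blockSigma_le H.measurable _) le_rfl).aestronglyMeasurable, H.integral_eq_zero,
    zero_mul]

lemma sum_integral_mul_blockSum (H : LocalDependence μ X A B C)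
    (hX : ∀ i, MemLp (X i) 2 μ) :
    ∑ j, ∫ ω, X j ω * blockSum X (A j) ω ∂μ = ∫ ω, blockSum X Finset.univ ω ^ 2 ∂μ := by
  have integrable_mul (j : ι) (T : Finset ι) : Integrable (fun ω => X j ω * blockSum X T ω) μ :=
    (hX j).integrable_mul (memLp_finsetSum T fun k _ => hX k)
  have integral_mul_sum (j : ι) : ∫ ω, X j ω * blockSum X Finset.univ ω ∂μ =
      ∫ ω, X j ω * blockSum X (A j) ω ∂μ := by
    simp_rw [← blockSum_add_blockSum_compl X (A j), mul_add]
    rw [integral_add (integrable_mul _ _) (integrable_mul _ _),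
      H.integral_mul_eq_zero j (measurable_blockSum_blockSigma X subset_rfl), add_zero]
  simp_rw [← integral_mul_sum]
  rw [← integral_finsetSum _ fun j _ => integrable_mul j _]
  simp_rw [← Finset.sum_mul, sq]
  rfl

end LocalDependence

namespace NormalizedLocalDependence

variable {Ω ι : Type*} [MeasurableSpace Ω] [Fintype ι] [DecidableEq ι] {μ : Measure Ω}
  {X : ι → Ω → ℝ} {A B C : ι → Finset ι} {p : ℝ} {κ : ℕ} {b : ℝ}

lemma natCast_pos (H : NormalizedLocalDependence μ X A B C p κ b) : (0 : ℝ) < κ := by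
  have hne : Nonempty ι := by
    by_contra! hι
    simpa [blockSum] using H.integral_sq_eq_one
  obtain ⟨i⟩ := hne
  have hi : i ∈ Finset.univ.filter fun j => i ∈ C j := by simpa using H.mem_C i
  exact_mod_cast (Finset.card_pos.2 ⟨i, hi⟩).trans_le (H.card_mem_le i)

lemma pos (H : NormalizedLocalDependence μ X A B C p κ b) : 0 < b := by
  have moment_nonneg (i : ι) : 0 ≤ ∫ ω, |X i ω| ^ p ∂μ :=
    integral_nonneg fun ω => rpow_nonneg (abs_nonneg _) _
  by_contra! hb
  have hsum : ∑ i, ∫ ω, |X i ω| ^ p ∂μ = 0 := by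
    refine le_antisymm ?_ (Finset.sum_nonneg fun i _ => moment_nonneg i)
    exact nonpos_of_mul_nonpos_right (H.moment_le.trans hb) (rpow_pos_of_pos H.natCast_pos _)
  have X_eq_zero (i : ι) : X i =ᵐ[μ] 0 := by
    have hi := (Finset.sum_eq_zero_iff_of_nonneg fun i _ => moment_nonneg i).1 hsum i
      (Finset.mem_univ i)
    rw [integral_eq_zero_iff_of_nonneg (fun ω => rpow_nonneg (abs_nonneg _) _)
      (H.integrable_abs_rpow i)] at hi
    filter_upwards [hi] with ω hω
    simpa using (rpow_eq_zero (abs_nonneg _) (by linarith [H.two_lt])).1 hω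
  have sum_eq_zero : (fun ω => blockSum X Finset.univ ω ^ 2) =ᵐ[μ] 0 := by
    filter_upwards [ae_all_iff.2 X_eq_zero] with ω hω
    simp [blockSum, hω]
  simpa [integral_congr_ae sum_eq_zero] using H.integral_sq_eq_one

lemma card_C_le (H : NormalizedLocalDependence μ X A B C p κ b) (i : ι) : (C i).card ≤ κ := by
  refine (Finset.card_le_card fun k hk => ?_).trans (H.card_neighbors_le i)
  rw [neighbors, Finset.mem_filter_univ]
  exact ⟨k, Finset.mem_inter.mpr ⟨hk, H.A_subset_B k (H.mem_A k)⟩⟩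

lemma measurable_blockSum (H : NormalizedLocalDependence μ X A B C p κ b) (T : Finset ι) :
    Measurable (blockSum X T) :=
  _root_.measurable_blockSum H.measurable T

lemma measurable_blockAbsSum (H : NormalizedLocalDependence μ X A B C p κ b) (T : Finset ι) :
    Measurable (blockAbsSum X T) :=
  _root_.measurable_blockAbsSum H.measurable T

lemma integrable_blockAbsSum_rpow (H : NormalizedLocalDependence μ X A B C p κ b) (T : Finset ι) :
    Integrable (fun ω => blockAbsSum X T ω ^ p) μ :=
  _root_.integrable_blockAbsSum_rpow (by linarith [H.two_lt]) H.measurable H.integrable_abs_rpow T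

lemma sum_integral_blockAbsSum_rpow_le (H : NormalizedLocalDependence μ X A B C p κ b) :
    ∑ j, ∫ ω, blockAbsSum X (C j) ω ^ p ∂μ ≤ (κ : ℝ) * b := by
  have hp := H.two_lt
  calc ∑ j, ∫ ω, blockAbsSum X (C j) ω ^ p ∂μ
      ≤ ∑ j, (κ : ℝ) ^ (p - 1) * ∑ k ∈ C j, ∫ ω, |X k ω| ^ p ∂μ := by
        gcongr with j
        refine (integral_blockAbsSum_rpow_le (by linarith) H.measurable
          H.integrable_abs_rpow _).trans ?_
        gcongr
        · linarith
        · exact H.card_C_le j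
    _ = (κ : ℝ) ^ (p - 1) * ∑ k, ∑ j, if k ∈ C j then ∫ ω, |X k ω| ^ p ∂μ else 0 := by
        rw [← Finset.mul_sum, Finset.sum_comm]
        simp only [Finset.sum_ite_mem, Finset.univ_inter]
    _ ≤ (κ : ℝ) ^ (p - 1) * ∑ k, (κ : ℝ) * ∫ ω, |X k ω| ^ p ∂μ := by
        gcongr with k _
        rw [← Finset.sum_filter, Finset.sum_const, nsmul_eq_mul]
        gcongr
        exact H.card_mem_le k
    _ = κ * ((κ : ℝ) ^ (p - 1) * ∑ k, ∫ ω, |X k ω| ^ p ∂μ) := by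
        rw [← Finset.mul_sum, mul_left_comm]
    _ ≤ κ * b := by gcongr; exact H.moment_le

lemma integrable_natCast_mul_abs_rpow (H : NormalizedLocalDependence μ X A B C p κ b) (j : ι) :
    Integrable (fun ω => (κ * |X j ω|) ^ p) μ := by
  simp_rw [mul_rpow H.natCast_pos.le (abs_nonneg _)]
  exact (H.integrable_abs_rpow j).const_mul _

lemma sum_integral_natCast_mul_abs_rpow_le (H : NormalizedLocalDependence μ X A B C p κ b) :
    ∑ j, ∫ ω, (κ * |X j ω|) ^ p ∂μ ≤ (κ : ℝ) * b := by
  have hκ := H.natCast_pos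
  calc ∑ j, ∫ ω, (κ * |X j ω|) ^ p ∂μ
      = (κ : ℝ) ^ p * ∑ j, ∫ ω, |X j ω| ^ p ∂μ := by
        simp_rw [mul_rpow hκ.le (abs_nonneg _), integral_const_mul, Finset.mul_sum]
    _ = κ * ((κ : ℝ) ^ (p - 1) * ∑ j, ∫ ω, |X j ω| ^ p ∂μ) := by
        rw [rpow_sub_one hκ.ne']; field_simp
    _ ≤ κ * b := by gcongr; exact H.moment_le

lemma integrable_abs_mul_blockAbsSum_mul_rpow (H : NormalizedLocalDependence μ X A B C p κ b)
    (j : ι) {T T' : Finset ι} : Integrable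
      (fun ω => |X j ω| * blockAbsSum X T ω * blockAbsSum X T' ω ^ (p - 2)) μ :=
  integrable_mul_mul_rpow_sub_two H.two_lt.le (H.measurable j).abs (H.measurable_blockAbsSum _)
    (H.measurable_blockAbsSum _) (fun _ => abs_nonneg _) (blockAbsSum_nonneg X _)
    (blockAbsSum_nonneg X _) (H.integrable_abs_rpow j) (H.integrable_blockAbsSum_rpow _)
    (H.integrable_blockAbsSum_rpow _)

lemma integrable_sq_mul_blockAbsSum_rpow (H : NormalizedLocalDependence μ X A B C p κ b)
    (j : ι) (T : Finset ι) : Integrable (fun ω => X j ω ^ 2 * blockAbsSum X T ω ^ (p - 2)) μ := by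
  simpa only [← sq, sq_abs] using
    integrable_mul_mul_rpow_sub_two H.two_lt.le (H.measurable j).abs (H.measurable j).abs
      (H.measurable_blockAbsSum T) (fun _ => abs_nonneg _) (fun _ => abs_nonneg _)
      (blockAbsSum_nonneg X _) (H.integrable_abs_rpow j) (H.integrable_abs_rpow j)
      (H.integrable_blockAbsSum_rpow T)

lemma sum_integral_abs_mul_blockAbsSum_mul_rpow_le
    (H : NormalizedLocalDependence μ X A B C p κ b) :
    ∑ j, ∫ ω, |X j ω| * blockAbsSum X (C j) ω * blockAbsSum X (C j) ω ^ (p - 2) ∂μ ≤ b := by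
  refine le_of_mul_le_mul_left ?_ H.natCast_pos
  rw [Finset.mul_sum]
  refine sum_le_of_forall_le_weighted_mean _ H.two_lt.le (fun j _ => ?_)
    H.sum_integral_natCast_mul_abs_rpow_le H.sum_integral_blockAbsSum_rpow_le
    H.sum_integral_blockAbsSum_rpow_le
  rw [← integral_const_mul]
  simp_rw [← mul_assoc]
  exact integral_mul_mul_rpow_sub_two_le H.two_lt.le ((H.measurable j).abs.const_mul _)
    (H.measurable_blockAbsSum _) (H.measurable_blockAbsSum _) (fun ω => by positivity)
    (blockAbsSum_nonneg X _) (blockAbsSum_nonneg X _) (H.integrable_natCast_mul_abs_rpow j)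
    (H.integrable_blockAbsSum_rpow _) (H.integrable_blockAbsSum_rpow _)

lemma natCast_mul_sum_integral_sq_mul_rpow_le (H : NormalizedLocalDependence μ X A B C p κ b) :
    κ * ∑ j, ∫ ω, X j ω ^ 2 * blockAbsSum X (C j) ω ^ (p - 2) ∂μ ≤ b := by
  refine le_of_mul_le_mul_left ?_ H.natCast_pos
  rw [← mul_assoc, Finset.mul_sum]
  refine sum_le_of_forall_le_weighted_mean _ H.two_lt.le (fun j _ => ?_)
    H.sum_integral_natCast_mul_abs_rpow_le H.sum_integral_natCast_mul_abs_rpow_le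
    H.sum_integral_blockAbsSum_rpow_le
  have regroup (ω : Ω) : κ * κ * (X j ω ^ 2 * blockAbsSum X (C j) ω ^ (p - 2)) =
      κ * |X j ω| * (κ * |X j ω|) * blockAbsSum X (C j) ω ^ (p - 2) := by
    rw [← sq_abs (X j ω)]; ring
  rw [← integral_const_mul]
  simp_rw [regroup]
  exact integral_mul_mul_rpow_sub_two_le H.two_lt.le ((H.measurable j).abs.const_mul _)
    ((H.measurable j).abs.const_mul _) (H.measurable_blockAbsSum _) (fun ω => by positivity)
    (fun ω => by positivity) (blockAbsSum_nonneg X _) (H.integrable_natCast_mul_abs_rpow j)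
    (H.integrable_natCast_mul_abs_rpow j) (H.integrable_blockAbsSum_rpow _)

variable [IsProbabilityMeasure μ]

lemma integrable_blockAbsSum_rpow_sub_two (H : NormalizedLocalDependence μ X A B C p κ b)
    (T : Finset ι) : Integrable (fun ω => blockAbsSum X T ω ^ (p - 2)) μ :=
  integrable_rpow_sub_two H.two_lt.le (H.measurable_blockAbsSum T) (blockAbsSum_nonneg X T)
    (H.integrable_blockAbsSum_rpow T)

lemma integrable_abs_mul_blockAbsSum (H : NormalizedLocalDependence μ X A B C p κ b)
    (j : ι) (T : Finset ι) : Integrable (fun ω => |X j ω| * blockAbsSum X T ω) μ :=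
  integrable_mul_of_integrable_rpow H.two_lt.le (H.measurable j).abs (H.measurable_blockAbsSum T)
    (fun _ => abs_nonneg _) (blockAbsSum_nonneg X T) (H.integrable_abs_rpow j)
    (H.integrable_blockAbsSum_rpow T)

lemma sum_integral_mul_integral_blockAbsSum_rpow_le
    (H : NormalizedLocalDependence μ X A B C p κ b) :
    ∑ j, (∫ ω, |X j ω| * blockAbsSum X (C j) ω ∂μ) * ∫ ω, blockAbsSum X (C j) ω ^ (p - 2) ∂μ ≤
      b := by
  refine le_of_mul_le_mul_left ?_ H.natCast_pos
  rw [Finset.mul_sum]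
  refine sum_le_of_forall_le_weighted_mean _ H.two_lt.le (fun j _ => ?_)
    H.sum_integral_natCast_mul_abs_rpow_le H.sum_integral_blockAbsSum_rpow_le
    H.sum_integral_blockAbsSum_rpow_le
  rw [← mul_assoc, ← integral_const_mul (κ : ℝ)]
  simp_rw [← mul_assoc]
  exact integral_mul_mul_integral_rpow_sub_two_le H.two_lt.le ((H.measurable j).abs.const_mul _)
    (H.measurable_blockAbsSum _) (H.measurable_blockAbsSum _) (fun ω => by positivity)
    (blockAbsSum_nonneg X _) (blockAbsSum_nonneg X _) (H.integrable_natCast_mul_abs_rpow j)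
    (H.integrable_blockAbsSum_rpow _) (H.integrable_blockAbsSum_rpow _)

lemma memLp_two (H : NormalizedLocalDependence μ X A B C p κ b) (j : ι) : MemLp (X j) 2 μ := by
  have hp := H.two_lt
  have hp' : MemLp (X j) (ENNReal.ofReal p) μ := by
    rw [← integrable_norm_rpow_iff (H.measurable j).aestronglyMeasurable
      (by simp; linarith) ENNReal.ofReal_ne_top, ENNReal.toReal_ofReal (by linarith)]
    exact H.integrable_abs_rpow j
  refine hp'.mono_exponent ?_
  rw [← ENNReal.ofReal_ofNat]
  exact ENNReal.ofReal_le_ofReal hp.le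

lemma memLp_two_blockSum (H : NormalizedLocalDependence μ X A B C p κ b) (T : Finset ι) :
    MemLp (blockSum X T) 2 μ :=
  memLp_finsetSum T fun j _ => H.memLp_two j

lemma integrable (H : NormalizedLocalDependence μ X A B C p κ b) (j : ι) :
    Integrable (X j) μ :=
  (H.memLp_two j).integrable one_le_two

lemma integrable_sq (H : NormalizedLocalDependence μ X A B C p κ b) (j : ι) :
    Integrable (fun ω => X j ω ^ 2) μ :=
  (H.memLp_two j).integrable_sq

lemma integrable_blockSum (H : NormalizedLocalDependence μ X A B C p κ b) (T : Finset ι) :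
    Integrable (blockSum X T) μ :=
  (H.memLp_two_blockSum T).integrable one_le_two

lemma integrable_blockSum_sq (H : NormalizedLocalDependence μ X A B C p κ b) (T : Finset ι) :
    Integrable (fun ω => blockSum X T ω ^ 2) μ :=
  (H.memLp_two_blockSum T).integrable_sq

lemma integrable_mul_blockSum (H : NormalizedLocalDependence μ X A B C p κ b) (j : ι)
    (T : Finset ι) : Integrable (fun ω => X j ω * blockSum X T ω) μ :=
  (H.memLp_two j).integrable_mul (H.memLp_two_blockSum T)

lemma sixteen_mul_sq_integral_sq_le (H : NormalizedLocalDependence μ X A B C p κ b) (k : ι) :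
    16 * ((κ : ℝ) ^ 2 * ∫ ω, X k ω ^ 2 ∂μ) ≤
      (1 - 2 / p) + 2 / p * (64 * ∫ ω, (κ * |X k ω|) ^ p ∂μ) := by
  have hp := H.two_lt
  have four_rpow_le : (4 : ℝ) ^ p ≤ 64 :=
    (rpow_le_rpow_of_exponent_le (by norm_num) H.le_three).trans_eq (by norm_num)
  have pointwise (ω : Ω) : 16 * ((κ : ℝ) ^ 2 * X k ω ^ 2) ≤
      (1 - 2 / p) + 2 / p * (64 * (κ * |X k ω|) ^ p) := calc
    16 * ((κ : ℝ) ^ 2 * X k ω ^ 2) = (4 * (κ * |X k ω|)) ^ 2 := by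
        rw [mul_pow, mul_pow, sq_abs]; norm_num
    _ ≤ (1 - 2 / p) + 2 / p * (4 * (κ * |X k ω|)) ^ p :=
        sq_le_add_mul_rpow hp.le (by positivity)
    _ ≤ (1 - 2 / p) + 2 / p * (64 * (κ * |X k ω|) ^ p) := by
        rw [mul_rpow (by norm_num) (by positivity)]
        gcongr
  have integrable_rhs : Integrable (fun ω => 2 / p * (64 * (κ * |X k ω|) ^ p)) μ :=
    ((H.integrable_natCast_mul_abs_rpow k).const_mul _).const_mul _
  calc 16 * ((κ : ℝ) ^ 2 * ∫ ω, X k ω ^ 2 ∂μ) = ∫ ω, 16 * ((κ : ℝ) ^ 2 * X k ω ^ 2) ∂μ := by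
        rw [integral_const_mul, integral_const_mul]
    _ ≤ ∫ ω, ((1 - 2 / p) + 2 / p * (64 * (κ * |X k ω|) ^ p)) ∂μ :=
        integral_mono (((H.integrable_sq k).const_mul _).const_mul _)
          ((integrable_const _).fun_add integrable_rhs) pointwise
    _ = _ := by
        rw [integral_add (integrable_const _) integrable_rhs, integral_const_mul,
          integral_const_mul, integral_const, probReal_univ, one_smul]

lemma natCast_mul_sum_integral_sq_le (H : NormalizedLocalDependence μ X A B C p κ b)
    {T : Finset ι} (hT : T.card ≤ κ) : κ * ∑ k ∈ T, ∫ ω, X k ω ^ 2 ∂μ ≤ 1 / 16 := by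
  have hp := H.two_lt
  have hκ := H.natCast_pos
  have hp' : 2 / p ≤ 1 := by rw [div_le_one (by linarith)]; exact hp.le
  have moment_le : ∑ k ∈ T, ∫ ω, (κ * |X k ω|) ^ p ∂μ ≤ κ * (1 / 75) := calc
    _ ≤ ∑ k, ∫ ω, (κ * |X k ω|) ^ p ∂μ :=
        Finset.sum_le_sum_of_subset_of_nonneg (Finset.subset_univ _)
          fun k _ _ => integral_nonneg fun ω => by positivity
    _ ≤ κ * b := H.sum_integral_natCast_mul_abs_rpow_le
    _ ≤ κ * (1 / 75) := by gcongr; exact H.b_le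
  have sum_le : 16 * ((κ : ℝ) ^ 2 * ∑ k ∈ T, ∫ ω, X k ω ^ 2 ∂μ) ≤ κ := calc
    16 * ((κ : ℝ) ^ 2 * ∑ k ∈ T, ∫ ω, X k ω ^ 2 ∂μ)
      ≤ ∑ k ∈ T, ((1 - 2 / p) + 2 / p * (64 * ∫ ω, (κ * |X k ω|) ^ p ∂μ)) := by
        simp_rw [Finset.mul_sum]
        exact Finset.sum_le_sum fun k _ => H.sixteen_mul_sq_integral_sq_le k
    _ = T.card * (1 - 2 / p) + 2 / p * (64 * ∑ k ∈ T, ∫ ω, (κ * |X k ω|) ^ p ∂μ) := by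
        rw [Finset.sum_add_distrib, ← Finset.mul_sum, ← Finset.mul_sum, Finset.sum_const,
          nsmul_eq_mul]
    _ ≤ κ * (1 - 2 / p) + 2 / p * (64 * (κ * (1 / 75))) := by gcongr
    _ ≤ κ := by
        have : 0 ≤ κ * (2 / p) := by positivity
        linarith
  refine le_of_mul_le_mul_left ?_ hκ
  linarith

lemma integral_blockSum_sq_le (H : NormalizedLocalDependence μ X A B C p κ b) {T : Finset ι}
    (hT : T.card ≤ κ) : ∫ ω, blockSum X T ω ^ 2 ∂μ ≤ (1 / 4) ^ 2 := calc
  ∫ ω, blockSum X T ω ^ 2 ∂μ ≤ ∫ ω, κ * ∑ k ∈ T, X k ω ^ 2 ∂μ := by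
      refine integral_mono (H.integrable_blockSum_sq T)
        ((integrable_finsetSum T fun k _ => H.integrable_sq k).const_mul _) fun ω => ?_
      exact sq_sum_le_card_mul_sum_sq.trans (by gcongr)
  _ = κ * ∑ k ∈ T, ∫ ω, X k ω ^ 2 ∂μ := by
      rw [integral_const_mul, integral_finsetSum T fun k _ => H.integrable_sq k]
  _ ≤ 1 / 16 := H.natCast_mul_sum_integral_sq_le hT
  _ = (1 / 4) ^ 2 := by norm_num

lemma integral_abs_blockSum_compl_le (H : NormalizedLocalDependence μ X A B C p κ b)
    {T : Finset ι} (hT : T.card ≤ κ) : ∫ ω, |blockSum X Tᶜ ω| ∂μ ≤ 5 / 4 := by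
  have block_le : ∫ ω, |blockSum X T ω| ∂μ ≤ 1 / 4 :=
    integral_abs_le_of_integral_sq_le (H.memLp_two_blockSum T) (by norm_num)
      (H.integral_blockSum_sq_le hT)
  have total_le : ∫ ω, |blockSum X Finset.univ ω| ∂μ ≤ 1 :=
    integral_abs_le_of_integral_sq_le (H.memLp_two_blockSum _) zero_le_one
      (H.integral_sq_eq_one.trans_le (by norm_num))
  calc ∫ ω, |blockSum X Tᶜ ω| ∂μ
      ≤ ∫ ω, (|blockSum X Finset.univ ω| + |blockSum X T ω|) ∂μ := by
        refine integral_mono (H.integrable_blockSum _).abs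
          ((H.integrable_blockSum _).abs.fun_add (H.integrable_blockSum _).abs) fun ω => ?_
        beta_reduce
        rw [← sub_eq_of_eq_add' (blockSum_add_blockSum_compl X T ω).symm]
        exact abs_sub _ _
    _ = ∫ ω, |blockSum X Finset.univ ω| ∂μ + ∫ ω, |blockSum X T ω| ∂μ :=
        integral_add (H.integrable_blockSum _).abs (H.integrable_blockSum _).abs
    _ ≤ 5 / 4 := by linarith

lemma sum_integral_mul_blockSum_eq_one (H : NormalizedLocalDependence μ X A B C p κ b) :
    ∑ j, ∫ ω, X j ω * blockSum X (A j) ω ∂μ = 1 :=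
  (H.sum_integral_mul_blockSum H.memLp_two).trans H.integral_sq_eq_one

lemma integral_mul_blockSum_A_le (H : NormalizedLocalDependence μ X A B C p κ b) (j : ι) :
    ∫ ω, X j ω * blockSum X (A j) ω ∂μ ≤
      κ / 2 * ∫ ω, X j ω ^ 2 ∂μ + 1 / (2 * κ) * (1 / 4) ^ 2 := by
  have hκ := H.natCast_pos
  have hA : (A j).card ≤ κ := (Finset.card_le_card (H.A_subset_C j)).trans (H.card_C_le j)
  have am_gm (ω : Ω) : X j ω * blockSum X (A j) ω ≤
      κ / 2 * X j ω ^ 2 + 1 / (2 * κ) * blockSum X (A j) ω ^ 2 := by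
    have hsq : 0 ≤ 1 / (2 * κ) * (κ * X j ω - blockSum X (A j) ω) ^ 2 := by positivity
    rw [← sub_nonneg]
    exact hsq.trans_eq (by field_simp; ring)
  calc ∫ ω, X j ω * blockSum X (A j) ω ∂μ
      ≤ ∫ ω, (κ / 2 * X j ω ^ 2 + 1 / (2 * κ) * blockSum X (A j) ω ^ 2) ∂μ :=
        integral_mono (H.integrable_mul_blockSum _ _) (((H.integrable_sq j).const_mul _).fun_add
          ((H.integrable_blockSum_sq _).const_mul _)) am_gm
    _ = κ / 2 * ∫ ω, X j ω ^ 2 ∂μ + 1 / (2 * κ) * ∫ ω, blockSum X (A j) ω ^ 2 ∂μ := by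
        rw [integral_add ((H.integrable_sq j).const_mul _)
          ((H.integrable_blockSum_sq _).const_mul _), integral_const_mul, integral_const_mul]
    _ ≤ _ := by gcongr; exact H.integral_blockSum_sq_le hA

lemma sum_integral_mul_blockSum_le (H : NormalizedLocalDependence μ X A B C p κ b)
    {T : Finset ι} (hT : T.card ≤ κ) :
    ∑ j ∈ T, ∫ ω, X j ω * blockSum X (A j) ω ∂μ ≤ 1 / 16 := by
  have hκ := H.natCast_pos
  calc ∑ j ∈ T, ∫ ω, X j ω * blockSum X (A j) ω ∂μ
      ≤ ∑ j ∈ T, (κ / 2 * ∫ ω, X j ω ^ 2 ∂μ + 1 / (2 * κ) * (1 / 4) ^ 2) :=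
        Finset.sum_le_sum fun j _ => H.integral_mul_blockSum_A_le j
    _ = 1 / 2 * (κ * ∑ j ∈ T, ∫ ω, X j ω ^ 2 ∂μ) + T.card * (1 / (2 * κ) * (1 / 4) ^ 2) := by
        rw [Finset.sum_add_distrib, ← Finset.mul_sum, Finset.sum_const, nsmul_eq_mul]
        ring
    _ ≤ 1 / 2 * (1 / 16) + κ * (1 / (2 * κ) * (1 / 4) ^ 2) := by
        gcongr
        exact H.natCast_mul_sum_integral_sq_le hT
    _ = 1 / 16 := by field_simp; norm_num

end NormalizedLocalDependence

/-! ### Weighted concentration inequalities -/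

section Fubini

variable {Ω S : Type*} [MeasurableSpace Ω] [MeasurableSpace S] {μ : Measure Ω} {ν : Measure S}
  {g : Ω → ℝ} {K : ℝ}

lemma integrable_mul_of_abs_le (hg : Integrable g μ) {f : Ω → ℝ} (mf : Measurable f)
    (hf : ∀ ω, |f ω| ≤ K) : Integrable (fun ω => g ω * f ω) μ :=
  hg.mul_bdd mf.aestronglyMeasurable (ae_of_all _ hf)

variable [IsFiniteMeasure ν] {G : Ω × S → ℝ}

lemma integrable_mul_integral_right (hg : Integrable g μ) (mG : Measurable G)
    (hG : ∀ q, |G q| ≤ K) : Integrable (fun ω => g ω * ∫ s, G (ω, s) ∂ν) μ := by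
  simpa only [integral_const_mul] using
    (integrable_mul_of_abs_le (hg.comp_fst ν) mG hG).integral_prod_left

variable [SFinite μ]

lemma integral_mul_integral_swap (hg : Integrable g μ) (mG : Measurable G)
    (hG : ∀ q, |G q| ≤ K) :
    ∫ ω, g ω * ∫ s, G (ω, s) ∂ν ∂μ = ∫ s, ∫ ω, g ω * G (ω, s) ∂μ ∂ν := by
  simp_rw [← integral_integral_swap (f := fun ω s => g ω * G (ω, s))
    (integrable_mul_of_abs_le (hg.comp_fst ν) mG hG), integral_const_mul]

lemma integrable_integral_mul (hg : Integrable g μ) (mG : Measurable G)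
    (hG : ∀ q, |G q| ≤ K) : Integrable (fun s => ∫ ω, g ω * G (ω, s) ∂μ) ν :=
  (integrable_mul_of_abs_le (hg.comp_fst ν) mG hG).integral_prod_right

end Fubini

section Concentration

lemma abs_indicator_one_le_one {β : Type*} (s : Set β) (x : β) :
    |s.indicator (1 : β → ℝ) x| ≤ 1 := by
  by_cases h : x ∈ s <;> simp [h]

lemma mul_ramp_sub_ramp_eq_integral {α : ℝ} (hα : 0 < α) (z w : ℝ) {ρ : ℝ} (hρ : 0 ≤ ρ)
    (hρ' : ρ ≤ 1) :
    α * (ramp α z (w + ρ) - ramp α z (w - ρ)) =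
      ∫ u, (Set.Icc 0 ρ).indicator 1 |u| * (Set.Icc z (z + α)).indicator 1 (w + u)
        ∂windowMeasure := by
  have hind : ∀ u, (Set.Icc 0 ρ).indicator 1 |u| * (Set.Icc z (z + α)).indicator 1 (w + u) =
      ((w + ·) ⁻¹' (Set.Icc (w - ρ) (w + ρ) ∩ Set.Icc z (z + α))).indicator (1 : ℝ → ℝ) u := by
    intro u
    rw [Set.preimage_inter, Set.inter_indicator_one, Set.preimage_const_add_Icc,
      sub_sub_cancel_left, add_sub_cancel_left]
    have h : |u| ∈ Set.Icc 0 ρ ↔ u ∈ Set.Icc (-ρ) ρ := by simp [abs_le]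
    simp only [Pi.mul_apply, Set.indicator, h, Set.mem_preimage, Pi.one_apply]
  have hsub : (w + ·) ⁻¹' (Set.Icc (w - ρ) (w + ρ) ∩ Set.Icc z (z + α)) ⊆ Set.Icc (-1) 1 := by
    rintro u ⟨⟨hl, hr⟩, -⟩
    constructor <;> linarith
  simp_rw [hind]
  rw [mul_ramp_sub_ramp hα z (by linarith), integral_indicator_one (by measurability),
    measureReal_restrict_apply (by measurability), Set.inter_eq_left.2 hsub, measureReal_def,
    measureReal_def, measure_preimage_add]

lemma integral_indicator_Icc_abs {ρ : ℝ} (hρ : 0 ≤ ρ) (hρ' : ρ ≤ 1) :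
    ∫ u, (Set.Icc 0 ρ).indicator 1 |u| ∂windowMeasure = 2 * ρ := by
  have hind : ∀ u : ℝ, (Set.Icc 0 ρ).indicator (1 : ℝ → ℝ) |u| =
      (Set.Icc (-ρ) ρ).indicator 1 u := by
    intro u
    have h : |u| ∈ Set.Icc 0 ρ ↔ u ∈ Set.Icc (-ρ) ρ := by simp [abs_le]
    simp only [Set.indicator, h, Pi.one_apply]
  simp_rw [hind]
  rw [integral_indicator_one measurableSet_Icc, measureReal_restrict_apply measurableSet_Icc,
    Set.inter_eq_left.2 (Set.Icc_subset_Icc (by linarith) hρ'),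
    Real.volume_real_Icc_of_le (by linarith)]
  ring

lemma measurable_indicator_Icc_abs {Ω : Type*} {m : MeasurableSpace Ω} {ρ f : Ω → ℝ}
    (hρ : Measurable ρ) (hf : Measurable f) :
    Measurable fun ω => (Set.Icc 0 (ρ ω)).indicator (1 : ℝ → ℝ) |f ω| := by
  have hset : MeasurableSet {ω | |f ω| ≤ ρ ω} :=
    measurableSet_le (measurable_abs.comp hf) hρ
  convert measurable_const.indicator hset (f := fun _ => (1 : ℝ)) using 2 with ω
  simp only [Set.indicator, Set.mem_Icc, abs_nonneg, true_and, Set.mem_ofPred_eq, Pi.one_apply]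

variable {Ω : Type*} {m : MeasurableSpace Ω} [mΩ : MeasurableSpace Ω] {μ : Measure Ω}
  {W : Ω → ℝ} {α δ δ' : ℝ}

/-- The weighted concentration inequality `E[e 1{x ≤ W ≤ x + α}] ≤ δ E[e]` for all `x` and all
integrable weights `e ≥ 0` which are measurable with respect to the sub-σ-algebra `m`. -/
def WeightedConcentration (μ : Measure Ω) (m : MeasurableSpace Ω) (W : Ω → ℝ) (α δ : ℝ) : Prop :=
  ∀ e : Ω → ℝ, (∀ ω, 0 ≤ e ω) → Integrable e μ → Measurable[m] e → ∀ x : ℝ,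
    ∫ ω, e ω * (Set.Icc x (x + α)).indicator 1 (W ω) ∂μ ≤ δ * ∫ ω, e ω ∂μ

namespace WeightedConcentration

lemma mono (hC : WeightedConcentration μ m W α δ) (h : δ ≤ δ') :
    WeightedConcentration μ m W α δ' :=
  fun e e0 ie me x => (hC e e0 ie me x).trans
    (mul_le_mul_of_nonneg_right h (integral_nonneg e0))

lemma one (hW : Measurable W) : WeightedConcentration μ m W α 1 := by
  intro e e0 ie _ x
  rw [one_mul]
  refine integral_mono (integrable_mul_of_abs_le ie
    ((measurable_one.indicator measurableSet_Icc).comp hW) fun ω => abs_indicator_one_le_one _ _)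
    ie fun ω => ?_
  exact mul_le_of_le_one_right (e0 ω) ((le_abs_self _).trans (abs_indicator_one_le_one _ _))

lemma integral_mul_indicator_mul_indicator_le (hC : WeightedConcentration μ m W α δ)
    (hm : m ≤ mΩ) {e ρ : Ω → ℝ} (e0 : ∀ ω, 0 ≤ e ω) (ie : Integrable e μ)
    (me : Measurable[m] e) (mρ : Measurable[m] ρ) (z u : ℝ) :
    ∫ ω, e ω * ((Set.Icc 0 (ρ ω)).indicator 1 |u| *
        (Set.Icc z (z + α)).indicator 1 (W ω + u)) ∂μ ≤
      δ * ∫ ω, e ω * (Set.Icc 0 (ρ ω)).indicator 1 |u| ∂μ := by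
  have mI : Measurable[m] fun ω => (Set.Icc 0 (ρ ω)).indicator (1 : ℝ → ℝ) |u| :=
    measurable_indicator_Icc_abs mρ measurable_const
  convert hC (fun ω => e ω * (Set.Icc 0 (ρ ω)).indicator 1 |u|)
    (fun ω => mul_nonneg (e0 ω) (Set.indicator_nonneg (fun _ _ => zero_le_one) _))
    (integrable_mul_of_abs_le ie (mI.mono hm le_rfl) fun ω => abs_indicator_one_le_one _ _)
    (me.mul mI) (z - u) using 3 with ω
  have hmem : W ω + u ∈ Set.Icc z (z + α) ↔ W ω ∈ Set.Icc (z - u) (z - u + α) := by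
    constructor <;> rintro ⟨_, _⟩ <;> constructor <;> linarith
  simp only [← mul_assoc, Set.indicator, hmem, Pi.one_apply]

variable [SFinite μ]

lemma integral_mul_ramp_sub_ramp_le (hC : WeightedConcentration μ m W α δ) (hα : 0 < α)
    (hm : m ≤ mΩ) (hW : Measurable W) {e ρ : Ω → ℝ} (e0 : ∀ ω, 0 ≤ e ω) (ie : Integrable e μ)
    (me : Measurable[m] e) (ρ0 : ∀ ω, 0 ≤ ρ ω) (ρ1 : ∀ ω, ρ ω ≤ 1) (mρ : Measurable[m] ρ)
    (z : ℝ) :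
    ∫ ω, e ω * (ramp α z (W ω + ρ ω) - ramp α z (W ω - ρ ω)) ∂μ ≤
      2 * δ / α * ∫ ω, e ω * ρ ω ∂μ := by
  let G : Ω × ℝ → ℝ := fun q => (Set.Icc 0 (ρ q.1)).indicator 1 |q.2|
  let GW : Ω × ℝ → ℝ := fun q => G q * (Set.Icc z (z + α)).indicator 1 (W q.1 + q.2)
  have mG : Measurable G :=
    measurable_indicator_Icc_abs ((mρ.mono hm le_rfl).comp measurable_fst) measurable_snd
  have mGW : Measurable GW := mG.mul ((measurable_one.indicator measurableSet_Icc).comp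
    ((hW.comp measurable_fst).add measurable_snd))
  have hG : ∀ q, |G q| ≤ 1 := fun q => abs_indicator_one_le_one _ _
  have hGW : ∀ q, |GW q| ≤ 1 := fun q => by
    rw [abs_mul]
    exact mul_le_one₀ (hG q) (abs_nonneg _) (abs_indicator_one_le_one _ _)
  have hramp : α * ∫ ω, e ω * (ramp α z (W ω + ρ ω) - ramp α z (W ω - ρ ω)) ∂μ =
      ∫ ω, e ω * ∫ u, GW (ω, u) ∂windowMeasure ∂μ := by
    rw [← integral_const_mul]
    refine integral_congr_ae (ae_of_all _ fun ω => ?_)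
    beta_reduce
    rw [mul_left_comm, mul_ramp_sub_ramp_eq_integral hα z _ (ρ0 ω) (ρ1 ω)]
  have hscaled : α * ∫ ω, e ω * (ramp α z (W ω + ρ ω) - ramp α z (W ω - ρ ω)) ∂μ ≤
      δ * (2 * ∫ ω, e ω * ρ ω ∂μ) :=
    calc _ = ∫ u, ∫ ω, e ω * GW (ω, u) ∂μ ∂windowMeasure := by
          rw [hramp, integral_mul_integral_swap ie mGW hGW]
      _ ≤ ∫ u, δ * ∫ ω, e ω * G (ω, u) ∂μ ∂windowMeasure :=
          integral_mono (integrable_integral_mul ie mGW hGW)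
            ((integrable_integral_mul ie mG hG).const_mul _)
            fun u => hC.integral_mul_indicator_mul_indicator_le hm e0 ie me mρ z u
      _ = δ * (2 * ∫ ω, e ω * ρ ω ∂μ) := by
          rw [integral_const_mul, ← integral_mul_integral_swap ie mG hG, ← integral_const_mul 2]
          congr 1
          refine integral_congr_ae (ae_of_all _ fun ω => ?_)
          beta_reduce
          rw [integral_indicator_Icc_abs (ρ0 ω) (ρ1 ω), mul_left_comm]
  rw [mul_comm 2, mul_div_right_comm, mul_assoc, div_mul_eq_mul_div, le_div_iff₀ hα]
  linarith

lemma abs_integral_mul_bump_sub_le (hC : WeightedConcentration μ m W α δ) (hα : 0 < α)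
    (hm : m ≤ mΩ) (hW : Measurable W) {e : Ω → ℝ} (e0 : ∀ ω, 0 ≤ e ω) (ie : Integrable e μ)
    (me : Measurable[m] e) (x : ℝ) {t : ℝ} (ht : |t| ≤ 1) :
    |∫ ω, e ω * bump α x (W ω + t) ∂μ - ∫ ω, e ω * bump α x (W ω) ∂μ| ≤
      4 * δ / α * |t| * ∫ ω, e ω ∂μ := by
  let osc (z : ℝ) (ω : Ω) : ℝ := ramp α z (W ω + |t|) - ramp α z (W ω - |t|)
  have iosc : ∀ z, Integrable (fun ω => e ω * osc z ω) μ := fun z =>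
    integrable_mul_of_abs_le ie
      (((continuous_ramp α z).measurable.comp (hW.add_const _)).sub
        ((continuous_ramp α z).measurable.comp (hW.sub_const _)))
      fun ω => abs_ramp_sub_ramp_le_one α z _ _
  have hosc : ∀ z, ∫ ω, e ω * osc z ω ∂μ ≤ 2 * δ / α * (|t| * ∫ ω, e ω ∂μ) := fun z =>
    (hC.integral_mul_ramp_sub_ramp_le hα hm hW e0 ie me (fun _ => abs_nonneg t) (fun _ => ht)
      measurable_const z).trans_eq (by rw [integral_mul_const, mul_comm |t|])
  have ibump : ∀ s, Integrable (fun ω => e ω * bump α x (W ω + s)) μ := fun s =>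
    integrable_mul_of_abs_le ie ((continuous_bump α x).measurable.comp (hW.add_const s))
      fun ω => abs_bump_le_one hα x _
  have ibump₀ : Integrable (fun ω => e ω * bump α x (W ω)) μ := by
    simpa only [add_zero] using ibump 0
  rw [← integral_sub (ibump t) ibump₀]
  calc |∫ ω, (e ω * bump α x (W ω + t) - e ω * bump α x (W ω)) ∂μ|
      ≤ ∫ ω, |e ω * bump α x (W ω + t) - e ω * bump α x (W ω)| ∂μ := abs_integral_le_integral_abs
    _ ≤ ∫ ω, (e ω * osc (x - α) ω + e ω * osc (x + α) ω) ∂μ := by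
        refine integral_mono ((ibump t).sub ibump₀).abs ((iosc _).fun_add (iosc _)) fun ω => ?_
        have hl := abs_le.1 (abs_ramp_add_sub_ramp_le hα (x - α) (W ω) (le_refl |t|))
        have hr := abs_le.1 (abs_ramp_add_sub_ramp_le hα (x + α) (W ω) (le_refl |t|))
        simp only [← mul_sub, ← mul_add, abs_mul, abs_of_nonneg (e0 ω), osc, bump]
        exact mul_le_mul_of_nonneg_left (abs_le.2 ⟨by linarith, by linarith⟩) (e0 ω)
    _ ≤ 4 * δ / α * |t| * ∫ ω, e ω ∂μ := by
        rw [integral_add (iosc _) (iosc _)]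
        linear_combination hosc (x - α) + hosc (x + α)

end WeightedConcentration

end Concentration

/-! ### Truncated block sums and their kernels -/

section Variance

variable {Ω ι : Type*} [MeasurableSpace Ω] {μ : Measure Ω}

lemma sum_integral_le_sum_integral_univ [Fintype ι] (J : Finset ι) {f g : ι → Ω → ℝ}
    (hf : ∀ j ω, 0 ≤ f j ω) (hg : ∀ j, Integrable (g j) μ) (hfg : ∀ j ω, f j ω ≤ g j ω) :
    ∑ j ∈ J, ∫ ω, f j ω ∂μ ≤ ∑ j, ∫ ω, g j ω ∂μ :=
  (Finset.sum_le_sum fun j _ =>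
    integral_mono_of_nonneg (ae_of_all _ (hf j)) (hg j) (ae_of_all _ (hfg j))).trans
    (Finset.sum_le_univ_sum_of_nonneg fun j => integral_nonneg fun ω =>
      (hf j ω).trans (hfg j ω))

lemma integral_mul_le_half_add_half {f g : Ω → ℝ} (hf : MemLp f 2 μ) (hg : MemLp g 2 μ) :
    ∫ ω, f ω * g ω ∂μ ≤ (∫ ω, f ω ^ 2 ∂μ) / 2 + (∫ ω, g ω ^ 2 ∂μ) / 2 := by
  rw [← integral_div, ← integral_div,
    ← integral_add (hf.integrable_sq.div_const 2) (hg.integrable_sq.div_const 2)]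
  refine integral_mono (hf.integrable_mul hg)
    ((hf.integrable_sq.div_const 2).fun_add (hg.integrable_sq.div_const 2)) fun ω => ?_
  beta_reduce
  linarith [sq_nonneg (f ω - g ω), sub_sq (f ω) (g ω)]

lemma integral_sum_sq_le_of_forall_card_le {Z : ι → Ω → ℝ} (hZ : ∀ j, MemLp (Z j) 2 μ)
    (J : Finset ι) (r : ι → ι → Prop) [DecidableRel r] {κ : ℕ}
    (hr : ∀ j k, ¬ r j k → ∫ ω, Z j ω * Z k ω ∂μ = 0)
    (hrow : ∀ j, (J.filter fun k => r j k).card ≤ κ)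
    (hcol : ∀ k, (J.filter fun j => r j k).card ≤ κ) :
    ∫ ω, (∑ j ∈ J, Z j ω) ^ 2 ∂μ ≤ κ * ∑ j ∈ J, ∫ ω, Z j ω ^ 2 ∂μ := by
  have integrable_mul (j k : ι) : Integrable (fun ω => Z j ω * Z k ω) μ :=
    (hZ j).integrable_mul (hZ k)
  have expand : ∫ ω, (∑ j ∈ J, Z j ω) ^ 2 ∂μ = ∑ j ∈ J, ∑ k ∈ J, ∫ ω, Z j ω * Z k ω ∂μ := by
    simp_rw [sq, Finset.sum_mul_sum]
    rw [integral_finsetSum _ fun j _ => integrable_finsetSum _ fun k _ => integrable_mul j k]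
    simp_rw [integral_finsetSum J fun k _ => integrable_mul _ k]
  calc ∫ ω, (∑ j ∈ J, Z j ω) ^ 2 ∂μ
      ≤ ∑ j ∈ J, ∑ k ∈ J, ((if r j k then (∫ ω, Z j ω ^ 2 ∂μ) / 2 else 0) +
          if r j k then (∫ ω, Z k ω ^ 2 ∂μ) / 2 else 0) := by
        rw [expand]
        gcongr with j _ k _
        split_ifs with h
        · exact integral_mul_le_half_add_half (hZ j) (hZ k)
        · rw [hr j k h, add_zero]
    _ = ∑ j ∈ J, (J.filter fun k => r j k).card * ((∫ ω, Z j ω ^ 2 ∂μ) / 2) +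
        ∑ k ∈ J, (J.filter fun j => r j k).card * ((∫ ω, Z k ω ^ 2 ∂μ) / 2) := by
        simp_rw [Finset.sum_add_distrib]
        congr 1
        · simp_rw [← Finset.sum_filter, Finset.sum_const, nsmul_eq_mul]
        · rw [Finset.sum_comm]
          simp_rw [← Finset.sum_filter, Finset.sum_const, nsmul_eq_mul]
    _ ≤ ∑ j ∈ J, κ * ((∫ ω, Z j ω ^ 2 ∂μ) / 2) + ∑ k ∈ J, κ * ((∫ ω, Z k ω ^ 2 ∂μ) / 2) := by
        gcongr
        · exact hrow _
        · exact hcol _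
    _ = κ * ∑ j ∈ J, ∫ ω, Z j ω ^ 2 ∂μ := by
        rw [← Finset.sum_add_distrib, Finset.mul_sum]
        exact Finset.sum_congr rfl fun j _ => by ring

end Variance

section Truncation

variable {Ω ι : Type*} {X : ι → Ω → ℝ} {S T : Finset ι}

/-- The partial sum `∑ k ∈ T, X k` truncated to `[-1, 1]`; for `T = A j` it replaces the increment
of `W` due to `X j`, so that only shifts in `[-1, 1]` occur. -/
noncomputable def truncBlockSum (X : ι → Ω → ℝ) (T : Finset ι) (ω : Ω) : ℝ :=
  clamp (blockSum X T ω)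

lemma measurable_truncBlockSum_blockSigma (X : ι → Ω → ℝ) (h : S ⊆ T) :
    Measurable[blockSigma X T] (truncBlockSum X S) :=
  measurable_clamp.comp (measurable_blockSum_blockSigma X h)

lemma abs_truncBlockSum_le_one (X : ι → Ω → ℝ) (T : Finset ι) (ω : Ω) :
    |truncBlockSum X T ω| ≤ 1 :=
  abs_clamp_le_one _

/-- The kernel of the truncated increment belonging to `X j`: its integral over `t` is
`X j * truncBlockSum X (A j)`. -/
noncomputable def truncKernel (X : ι → Ω → ℝ) (A : ι → Finset ι) (j : ι) (t : ℝ) (ω : Ω) : ℝ :=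
  X j ω * incrementKernel (truncBlockSum X (A j) ω) t

lemma truncKernel_sq (X : ι → Ω → ℝ) (A : ι → Finset ι) (j : ι) (t : ℝ) (ω : Ω) :
    truncKernel X A j t ω ^ 2 =
      X j ω ^ 2 * |incrementKernel (truncBlockSum X (A j) ω) t| := by
  rw [truncKernel, mul_pow, incrementKernel_sq]

lemma measurable_truncKernel_blockSigma {A : ι → Finset ι} {j : ι} (hj : j ∈ A j)
    (h : A j ⊆ T) (t : ℝ) : Measurable[blockSigma X T] (truncKernel X A j t) :=
  (measurable_blockSigma X (h hj)).mul
    ((measurable_incrementKernel.comp measurable_prodMk_right).comp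
      (measurable_truncBlockSum_blockSigma X h))

end Truncation

namespace NormalizedLocalDependence

variable {Ω ι : Type*} [MeasurableSpace Ω] [Fintype ι] [DecidableEq ι] {μ : Measure Ω}
  {X : ι → Ω → ℝ} {A B C : ι → Finset ι} {p : ℝ} {κ : ℕ} {b : ℝ}

lemma measurable_truncBlockSum (H : NormalizedLocalDependence μ X A B C p κ b) (T : Finset ι) :
    Measurable (truncBlockSum X T) :=
  measurable_clamp.comp (H.measurable_blockSum T)

lemma abs_truncBlockSum_le_blockAbsSum (H : NormalizedLocalDependence μ X A B C p κ b) (j : ι)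
    (ω : Ω) : |truncBlockSum X (A j) ω| ≤ blockAbsSum X (C j) ω :=
  (abs_clamp_le_abs _).trans (abs_blockSum_le_blockAbsSum X (H.A_subset_C j) ω)

lemma abs_truncBlockSum_le_rpow (H : NormalizedLocalDependence μ X A B C p κ b) (j : ι) (ω : Ω) :
    |truncBlockSum X (A j) ω| ≤ blockAbsSum X (C j) ω ^ (p - 2) :=
  abs_clamp_le_rpow (abs_blockSum_le_blockAbsSum X (H.A_subset_C j) ω)
    (by linarith [H.two_lt]) (by linarith [H.le_three])

lemma abs_mul_abs_sub_truncBlockSum_le (H : NormalizedLocalDependence μ X A B C p κ b) (j : ι)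
    (ω : Ω) : |X j ω| * |blockSum X (A j) ω - truncBlockSum X (A j) ω| ≤
      |X j ω| * blockAbsSum X (C j) ω * blockAbsSum X (C j) ω ^ (p - 2) := by
  have hp := H.two_lt
  rw [mul_assoc]
  gcongr
  calc |blockSum X (A j) ω - truncBlockSum X (A j) ω|
      ≤ |blockSum X (A j) ω| ^ (p - 1) := abs_sub_clamp_le_rpow _ (by linarith)
    _ ≤ blockAbsSum X (C j) ω ^ (p - 1) :=
        rpow_le_rpow (abs_nonneg _) (abs_blockSum_le_blockAbsSum X (H.A_subset_C j) ω)
          (by linarith)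
    _ = blockAbsSum X (C j) ω * blockAbsSum X (C j) ω ^ (p - 2) := by
        rw [show p - 1 = 1 + (p - 2) by ring, rpow_add_of_nonneg (blockAbsSum_nonneg X _ ω)
          zero_le_one (by linarith), rpow_one]

lemma sum_integral_abs_mul_abs_sub_truncBlockSum_le
    (H : NormalizedLocalDependence μ X A B C p κ b) (J : Finset ι) :
    ∑ j ∈ J, ∫ ω, |X j ω| * |blockSum X (A j) ω - truncBlockSum X (A j) ω| ∂μ ≤ b :=
  (sum_integral_le_sum_integral_univ J (fun _ _ => mul_nonneg (abs_nonneg _) (abs_nonneg _))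
    (fun j => H.integrable_abs_mul_blockAbsSum_mul_rpow j)
    H.abs_mul_abs_sub_truncBlockSum_le).trans H.sum_integral_abs_mul_blockAbsSum_mul_rpow_le

lemma sum_integral_abs_mul_abs_truncBlockSum_mul_le
    (H : NormalizedLocalDependence μ X A B C p κ b) (J : Finset ι) :
    ∑ j ∈ J, ∫ ω, |X j ω| * |truncBlockSum X (A j) ω| * |truncBlockSum X (A j) ω| ∂μ ≤ b := by
  refine (sum_integral_le_sum_integral_univ J
    (fun _ _ => mul_nonneg (mul_nonneg (abs_nonneg _) (abs_nonneg _)) (abs_nonneg _))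
    (fun j => H.integrable_abs_mul_blockAbsSum_mul_rpow j) fun j ω => ?_).trans
    H.sum_integral_abs_mul_blockAbsSum_mul_rpow_le
  have := blockAbsSum_nonneg X (C j) ω
  gcongr
  · exact H.abs_truncBlockSum_le_blockAbsSum j ω
  · exact H.abs_truncBlockSum_le_rpow j ω

lemma natCast_mul_sum_integral_sq_mul_abs_truncBlockSum_le
    (H : NormalizedLocalDependence μ X A B C p κ b) (J : Finset ι) :
    κ * ∑ j ∈ J, ∫ ω, X j ω ^ 2 * |truncBlockSum X (A j) ω| ∂μ ≤ b := by
  refine (mul_le_mul_of_nonneg_left (sum_integral_le_sum_integral_univ J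
    (fun _ _ => mul_nonneg (sq_nonneg _) (abs_nonneg _))
    (fun j => H.integrable_sq_mul_blockAbsSum_rpow j (C j)) fun j ω => ?_)
    H.natCast_pos.le).trans H.natCast_mul_sum_integral_sq_mul_rpow_le
  gcongr
  exact H.abs_truncBlockSum_le_rpow j ω

lemma integrable_abs_mul_abs_sub_truncBlockSum (H : NormalizedLocalDependence μ X A B C p κ b)
    (j : ι) :
    Integrable (fun ω => |X j ω| * |blockSum X (A j) ω - truncBlockSum X (A j) ω|) μ := by
  refine (H.integrable_abs_mul_blockAbsSum_mul_rpow j (T := C j) (T' := C j)).mono'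
    ((H.measurable j).abs.mul
      ((H.measurable_blockSum _).sub (H.measurable_truncBlockSum _)).abs).aestronglyMeasurable
    (ae_of_all _ fun ω => ?_)
  rw [norm_of_nonneg (by positivity)]
  exact H.abs_mul_abs_sub_truncBlockSum_le j ω

variable [IsProbabilityMeasure μ]

lemma integrable_abs_mul_abs_truncBlockSum (H : NormalizedLocalDependence μ X A B C p κ b)
    (j : ι) : Integrable (fun ω => |X j ω| * |truncBlockSum X (A j) ω|) μ :=
  integrable_mul_of_abs_le (H.integrable j).abs (H.measurable_truncBlockSum _).abs
    fun ω => (abs_abs _).trans_le (abs_truncBlockSum_le_one X _ ω)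

lemma le_sum_integral_mul_truncBlockSum (H : NormalizedLocalDependence μ X A B C p κ b)
    {T : Finset ι} (hT : T.card ≤ κ) :
    15 / 16 - 1 / 75 ≤ ∑ j ∈ Tᶜ, ∫ ω, X j ω * truncBlockSum X (A j) ω ∂μ := by
  have integrable_trunc (j : ι) : Integrable (fun ω => X j ω * truncBlockSum X (A j) ω) μ :=
    integrable_mul_of_abs_le (H.integrable j) (H.measurable_truncBlockSum _)
      (abs_truncBlockSum_le_one X _)
  have untruncate (j : ι) : ∫ ω, X j ω * blockSum X (A j) ω ∂μ ≤
      ∫ ω, X j ω * truncBlockSum X (A j) ω ∂μ +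
        ∫ ω, |X j ω| * |blockSum X (A j) ω - truncBlockSum X (A j) ω| ∂μ := by
    rw [← integral_add (integrable_trunc j) (H.integrable_abs_mul_abs_sub_truncBlockSum j)]
    refine integral_mono (H.integrable_mul_blockSum _ _)
      ((integrable_trunc j).fun_add (H.integrable_abs_mul_abs_sub_truncBlockSum j)) fun ω => ?_
    simp only [← abs_mul]
    linarith [le_abs_self (X j ω * (blockSum X (A j) ω - truncBlockSum X (A j) ω))]
  have split_sum := Finset.sum_add_sum_compl T fun j => ∫ ω, X j ω * blockSum X (A j) ω ∂μ
  have far_sum := Finset.sum_le_sum fun j (_ : j ∈ Tᶜ) => untruncate j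
  rw [Finset.sum_add_distrib] at far_sum
  linarith [H.sum_integral_mul_blockSum_eq_one, H.sum_integral_mul_blockSum_le hT,
    H.sum_integral_abs_mul_abs_sub_truncBlockSum_le Tᶜ, H.b_le]

lemma memLp_two_truncKernel (H : NormalizedLocalDependence μ X A B C p κ b) (j : ι) (t : ℝ) :
    MemLp (truncKernel X A j t) 2 μ := by
  refine (H.memLp_two j).mono ((measurable_truncKernel_blockSigma (H.mem_A j) subset_rfl t).mono
    (blockSigma_le H.measurable _) le_rfl).aestronglyMeasurable (ae_of_all _ fun ω => ?_)
  rw [norm_eq_abs, norm_eq_abs, truncKernel, abs_mul]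
  exact mul_le_of_le_one_right (abs_nonneg _) (abs_incrementKernel_le_one _ _)

lemma integral_centered_truncKernel_mul_eq_zero (H : NormalizedLocalDependence μ X A B C p κ b)
    {j k : ι} (hjk : ¬(B j ∩ A k).Nonempty) (t : ℝ) :
    ∫ ω, (truncKernel X A j t ω - ∫ ω', truncKernel X A j t ω' ∂μ) *
      (truncKernel X A k t ω - ∫ ω', truncKernel X A k t ω' ∂μ) ∂μ = 0 := by
  have A_subset : A k ⊆ (B j)ᶜ := by
    rwa [Finset.subset_compl_iff_disjoint_left, Finset.disjoint_iff_inter_eq_empty,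
      ← Finset.not_nonempty_iff_eq_empty]
  have hind : IndepFun (truncKernel X A j t) (truncKernel X A k t) μ :=
    indepFun_of_indep (H.indep_B j) (measurable_truncKernel_blockSigma (H.mem_A j) subset_rfl t)
      (measurable_truncKernel_blockSigma (H.mem_A k) A_subset t)
  exact hind.covariance_eq_zero (H.memLp_two_truncKernel j t) (H.memLp_two_truncKernel k t)

lemma memLp_two_sum_truncKernel (H : NormalizedLocalDependence μ X A B C p κ b)
    (J : Finset ι) (t : ℝ) : MemLp (fun ω => ∑ j ∈ J, truncKernel X A j t ω) 2 μ :=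
  memLp_finsetSum J fun j _ => H.memLp_two_truncKernel j t

lemma integral_sum_truncKernel_sub_sq_le (H : NormalizedLocalDependence μ X A B C p κ b)
    (J : Finset ι) (t : ℝ) :
    ∫ ω, (∑ j ∈ J, truncKernel X A j t ω - ∑ j ∈ J, ∫ ω', truncKernel X A j t ω' ∂μ) ^ 2 ∂μ ≤
      κ * ∑ j ∈ J, ∫ ω, X j ω ^ 2 * |incrementKernel (truncBlockSum X (A j) ω) t| ∂μ := by
  simp_rw [← Finset.sum_sub_distrib]
  have variance_le (j : ι) : ∫ ω, (truncKernel X A j t ω - ∫ ω', truncKernel X A j t ω' ∂μ) ^ 2 ∂μ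
      ≤ ∫ ω, X j ω ^ 2 * |incrementKernel (truncBlockSum X (A j) ω) t| ∂μ := by
    have hK := (H.memLp_two_truncKernel j t).aestronglyMeasurable
    simpa only [variance_eq_integral hK.aemeasurable, Pi.pow_apply, truncKernel_sq] using
      variance_le_expectation_sq hK
  refine (integral_sum_sq_le_of_forall_card_le (κ := κ)
    (fun j => (H.memLp_two_truncKernel j t).sub (memLp_const _)) J
    (fun j k => (B j ∩ A k).Nonempty)
    (fun j k hjk => H.integral_centered_truncKernel_mul_eq_zero hjk t)
    (fun j => (Finset.card_le_card fun k hk => ?_).trans (H.card_neighbors_le j))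
    fun k => (Finset.card_le_card fun j hj => ?_).trans (H.card_neighbors_le k)).trans ?_
  · exact Finset.mem_filter_univ _ |>.2 <| (Finset.mem_filter.1 hk).2.mono
      (Finset.inter_subset_inter (H.B_subset_C j) (H.A_subset_B k))
  · rw [Finset.mem_filter, Finset.inter_comm] at hj
    exact Finset.mem_filter_univ _ |>.2 <| hj.2.mono
      (Finset.inter_subset_inter (H.A_subset_C k) subset_rfl)
  · exact mul_le_mul_of_nonneg_left (Finset.sum_le_sum fun j _ => variance_le j)
      H.natCast_pos.le

end NormalizedLocalDependence

/-! ### Concentration of the sum conditionally on a block -/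

section KernelIntegrals

variable {Ω : Type*} [MeasurableSpace Ω] {μ : Measure Ω} {g e f s W Y : Ω → ℝ} {α : ℝ}

lemma measurable_incrementKernel_comp (mY : Measurable Y) :
    Measurable fun q : Ω × ℝ => incrementKernel (Y q.1) q.2 :=
  measurable_incrementKernel.comp ((mY.comp measurable_fst).prodMk measurable_snd)

lemma measurable_bump_add (mW : Measurable W) (α x : ℝ) :
    Measurable fun q : Ω × ℝ => bump α x (W q.1 + q.2) :=
  (continuous_bump α x).measurable.comp ((mW.comp measurable_fst).add measurable_snd)

lemma abs_bump_mul_incrementKernel_le_one (hα : 0 < α) (x w y t : ℝ) :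
    |bump α x w * incrementKernel y t| ≤ 1 := by
  rw [abs_mul]
  exact mul_le_one₀ (abs_bump_le_one hα x w) (abs_nonneg _) (abs_incrementKernel_le_one y t)

lemma abs_abs_incrementKernel_le_one (y t : ℝ) : |(|incrementKernel y t|)| ≤ 1 :=
  (abs_abs _).trans_le (abs_incrementKernel_le_one y t)

lemma abs_bump_sq_le_one (hα : 0 < α) (x w : ℝ) : |bump α x w ^ 2| ≤ 1 :=
  (abs_pow _ 2).trans_le (pow_le_one₀ (abs_nonneg _) (abs_bump_le_one hα x w))

lemma mul_integral_sub_le_integral_mul (he : ∀ ω, 0 ≤ e ω) {M : ℝ}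
    (hf : Integrable (fun ω => e ω * f ω) μ) (hf2 : Integrable (fun ω => e ω * f ω ^ 2) μ)
    (hs2 : Integrable (fun ω => e ω * (s ω - M) ^ 2) μ)
    (hfs : Integrable (fun ω => e ω * f ω * s ω) μ) :
    M * ∫ ω, e ω * f ω ∂μ -
        (1 / 16 * ∫ ω, e ω * f ω ^ 2 ∂μ + 4 * ∫ ω, e ω * (s ω - M) ^ 2 ∂μ) ≤
      ∫ ω, e ω * f ω * s ω ∂μ := by
  have error := (hf2.const_mul (1 / 16)).fun_add (hs2.const_mul 4)
  rw [← integral_const_mul M, ← integral_const_mul (1 / 16), ← integral_const_mul 4,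
    ← integral_add (hf2.const_mul _) (hs2.const_mul _), ← integral_sub (hf.const_mul _) error]
  refine integral_mono ((hf.const_mul _).sub error) hfs fun ω => ?_
  beta_reduce
  linarith [mul_nonneg (he ω) (sq_nonneg (f ω / 4 + 2 * (s ω - M)))]

variable [SFinite μ]

lemma integral_integral_mul_incrementKernel (hg : Integrable g μ) (mY : Measurable Y)
    (hY : ∀ ω, |Y ω| ≤ 1) :
    ∫ t, ∫ ω, g ω * incrementKernel (Y ω) t ∂μ ∂windowMeasure = ∫ ω, g ω * Y ω ∂μ := by
  rw [← integral_mul_integral_swap hg (measurable_incrementKernel_comp mY)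
    fun _ => abs_incrementKernel_le_one _ _]
  simp_rw [integral_incrementKernel (hY _)]

lemma integral_integral_mul_abs_incrementKernel (hg : Integrable g μ) (mY : Measurable Y)
    (hY : ∀ ω, |Y ω| ≤ 1) :
    ∫ t, ∫ ω, g ω * |incrementKernel (Y ω) t| ∂μ ∂windowMeasure = ∫ ω, g ω * |Y ω| ∂μ := by
  rw [← integral_mul_integral_swap hg (measurable_incrementKernel_comp mY).abs
    fun _ => abs_abs_incrementKernel_le_one _ _]
  simp_rw [integral_abs_incrementKernel (hY _)]

lemma integral_integral_mul_bump_mul_incrementKernel (hα : 0 < α) (hg : Integrable g μ)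
    (mW : Measurable W) (mY : Measurable Y) (hY : ∀ ω, |Y ω| ≤ 1) (x : ℝ) :
    ∫ t, ∫ ω, g ω * (bump α x (W ω + t) * incrementKernel (Y ω) t) ∂μ ∂windowMeasure =
      ∫ ω, g ω * (bumpPrimitive α x (W ω) - bumpPrimitive α x (W ω - Y ω)) ∂μ := by
  rw [← integral_mul_integral_swap hg
    (G := fun q => bump α x (W q.1 + q.2) * incrementKernel (Y q.1) q.2)
    ((measurable_bump_add mW α x).mul (measurable_incrementKernel_comp mY))
    fun _ => abs_bump_mul_incrementKernel_le_one hα _ _ _ _]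
  simp_rw [integral_bump_mul_incrementKernel (hY _)]

lemma integral_integral_mul_bump_sq_le (hα : 0 < α) (he : ∀ ω, 0 ≤ e ω) (ie : Integrable e μ)
    (mW : Measurable W) (x : ℝ) :
    ∫ t, ∫ ω, e ω * bump α x (W ω + t) ^ 2 ∂μ ∂windowMeasure ≤ 3 * α * ∫ ω, e ω ∂μ := by
  have mG := (measurable_bump_add mW α x).pow_const 2
  rw [← integral_mul_integral_swap ie mG fun _ => abs_bump_sq_le_one hα _ _,
    ← integral_const_mul (3 * α)]
  refine integral_mono (integrable_mul_integral_right ie mG fun _ => abs_bump_sq_le_one hα _ _)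
    (ie.const_mul _) fun ω => ?_
  beta_reduce
  rw [mul_comm]
  exact mul_le_mul_of_nonneg_right (setIntegral_bump_sq_le hα x (W ω)) (he ω)

end KernelIntegrals

section IntegratedBound

variable {S : Type*} [MeasurableSpace S] {ν : Measure S} {m r q v k : S → ℝ}

lemma integral_mul_sub_le_of_ae_le (hm : Integrable m ν) (hr : Integrable r ν)
    (hq : Integrable q ν) (hv : Integrable v ν) (hk : Integrable k ν) {P a₁ a₂ a₃ : ℝ}
    (h : ∀ᵐ t ∂ν, m t * P - (a₁ * r t + a₂ * q t + a₃ * v t) ≤ k t) :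
    (∫ t, m t ∂ν) * P - (a₁ * ∫ t, r t ∂ν + a₂ * ∫ t, q t ∂ν + a₃ * ∫ t, v t ∂ν) ≤
      ∫ t, k t ∂ν := by
  have errors₂ := (hr.const_mul a₁).fun_add (hq.const_mul a₂)
  have errors₃ := errors₂.fun_add (hv.const_mul a₃)
  rw [← integral_mul_const P, ← integral_const_mul a₁, ← integral_const_mul a₂,
    ← integral_const_mul a₃, ← integral_add (hr.const_mul _) (hq.const_mul _),
    ← integral_add errors₂ (hv.const_mul _), ← integral_sub (hm.mul_const _) errors₃]
  exact integral_mono_ae ((hm.mul_const _).sub errors₃) hk h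

end IntegratedBound

lemma mul_bumpPrimitive_sub_le {Ω ι : Type*} [Fintype ι] [DecidableEq ι] {α : ℝ} (hα : 0 < α)
    (X : ι → Ω → ℝ) (T : Finset ι) (x c : ℝ) (ω : Ω) :
    c * (bumpPrimitive α x (blockSum X Tᶜ ω) -
        bumpPrimitive α x (blockSum X Finset.univ ω - truncBlockSum X T ω)) ≤
      |c| * |blockSum X T ω - truncBlockSum X T ω| := by
  refine (le_abs_self _).trans ((abs_mul _ _).trans_le
    (mul_le_mul_of_nonneg_left ?_ (abs_nonneg c)))
  refine (abs_bumpPrimitive_sub_le hα x _ _).trans_eq ?_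
  rw [← blockSum_add_blockSum_compl X T ω, ← abs_neg]
  congr 1
  ring

lemma LocalDependence.indepFun_block {Ω ι : Type*} [MeasurableSpace Ω] [Fintype ι]
    [DecidableEq ι] {μ : Measure Ω} {X : ι → Ω → ℝ} {A B C : ι → Finset ι}
    (H : LocalDependence μ X A B C) {i : ι} {e g : Ω → ℝ}
    (me : Measurable[blockSigma X (B i)] e) (mg : Measurable[blockSigma X (C i)ᶜ] g) :
    IndepFun e g μ :=
  indepFun_of_indep (H.indep_C i) me mg

namespace NormalizedLocalDependence

variable {Ω ι : Type*} [mΩ : MeasurableSpace Ω] [Fintype ι] [DecidableEq ι] {μ : Measure Ω}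
  {X : ι → Ω → ℝ} {A B C : ι → Finset ι} {p : ℝ} {κ : ℕ} {b : ℝ} {i j : ι} {e : Ω → ℝ}

lemma A_subset_compl_C (H : NormalizedLocalDependence μ X A B C p κ b)
    (hj : j ∈ (neighbors B C i)ᶜ) : A j ⊆ (C i)ᶜ :=
  (H.A_subset_B j).trans (subset_compl_of_mem_compl_neighbors hj)

lemma B_subset_compl_A (H : NormalizedLocalDependence μ X A B C p κ b)
    (hj : j ∈ (neighbors B C i)ᶜ) : B i ⊆ (A j)ᶜ :=
  (H.B_subset_C i).trans <| by
    rw [Finset.subset_compl_comm]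
    exact H.A_subset_compl_C hj

lemma mem_compl_C (H : NormalizedLocalDependence μ X A B C p κ b)
    (hj : j ∈ (neighbors B C i)ᶜ) : j ∈ (C i)ᶜ :=
  H.A_subset_compl_C hj (H.mem_A j)

lemma integral_mul_bumpPrimitive_compl_eq_zero (H : NormalizedLocalDependence μ X A B C p κ b)
    (me : Measurable[blockSigma X (B i)] e) (α x : ℝ) (hj : j ∈ (neighbors B C i)ᶜ) :
    ∫ ω, e ω * X j ω * bumpPrimitive α x (blockSum X (A j)ᶜ ω) ∂μ = 0 := by
  rw [← H.integral_mul_eq_zero j ((me.mono (blockSigma_mono X (H.B_subset_compl_A hj)) le_rfl).mul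
    ((continuous_bumpPrimitive α x).measurable.comp
      (measurable_blockSum_blockSigma X subset_rfl)))]
  refine integral_congr_ae (ae_of_all _ fun ω => ?_)
  simp only [Pi.mul_apply, Function.comp_apply]
  ring

lemma measurable_sum_truncKernel_blockSigma (H : NormalizedLocalDependence μ X A B C p κ b)
    (i : ι) (t : ℝ) : Measurable[blockSigma X (C i)ᶜ]
      fun ω => ∑ j ∈ (neighbors B C i)ᶜ, truncKernel X A j t ω :=
  @Finset.measurable_fun_sum _ _ _ _ _ _ (blockSigma X (C i)ᶜ) _ _ fun j hj =>
    measurable_truncKernel_blockSigma (H.mem_A j) (H.A_subset_compl_C hj) t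

variable [IsProbabilityMeasure μ] {α δ : ℝ}

/-- The functional `∑ E[e X_j · bump (W + t) · K_j(t)]`, summed over the indices `j` whose blocks
do not meet `C i`; here `K_j` is the increment kernel of the truncated block sum `Y_j`. Its
integral over `t` is `∑ E[e X_j (F (W) - F (W - Y_j))]` with `F` the primitive of the bump, and
comparing an upper and a lower bound for that integral yields the concentration inequality. -/
noncomputable def concentrationTest (μ : Measure Ω) (X : ι → Ω → ℝ) (A B C : ι → Finset ι)
    (i : ι) (e : Ω → ℝ) (α x t : ℝ) : ℝ :=
  ∑ j ∈ (neighbors B C i)ᶜ, ∫ ω, e ω * X j ω *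
    (bump α x (blockSum X Finset.univ ω + t) * incrementKernel (truncBlockSum X (A j) ω) t) ∂μ

lemma integrable_mul_of_mem_compl_neighbors (H : NormalizedLocalDependence μ X A B C p κ b)
    (ie : Integrable e μ) (me : Measurable[blockSigma X (B i)] e)
    (hj : j ∈ (neighbors B C i)ᶜ) : Integrable (fun ω => e ω * X j ω) μ :=
  (H.indepFun_block me (measurable_blockSigma X (H.mem_compl_C hj))).integrable_mul ie
    (H.integrable j)

lemma integrable_concentrationTest (H : NormalizedLocalDependence μ X A B C p κ b) (hα : 0 < α)
    (ie : Integrable e μ) (me : Measurable[blockSigma X (B i)] e) (x : ℝ) :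
    Integrable (concentrationTest μ X A B C i e α x) windowMeasure :=
  integrable_finsetSum _ fun _ hj =>
    integrable_integral_mul (H.integrable_mul_of_mem_compl_neighbors ie me hj)
      ((measurable_bump_add (H.measurable_blockSum _) α x).mul
        (measurable_incrementKernel_comp (H.measurable_truncBlockSum _)))
      fun _ => abs_bump_mul_incrementKernel_le_one hα _ _ _ _

lemma integral_mul_bumpPrimitive_sub_le (H : NormalizedLocalDependence μ X A B C p κ b)
    (hα : 0 < α) (e0 : ∀ ω, 0 ≤ e ω) (ie : Integrable e μ)
    (me : Measurable[blockSigma X (B i)] e) (x : ℝ) (hj : j ∈ (neighbors B C i)ᶜ) :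
    ∫ ω, e ω * X j ω * (bumpPrimitive α x (blockSum X Finset.univ ω) -
        bumpPrimitive α x (blockSum X Finset.univ ω - truncBlockSum X (A j) ω)) ∂μ ≤
      ∫ ω, e ω * X j ω * bumpPrimitive α x (blockSum X Finset.univ ω) ∂μ +
        (∫ ω, e ω ∂μ) * ∫ ω, |X j ω| * |blockSum X (A j) ω - truncBlockSum X (A j) ω| ∂μ := by
  have integrable_F {g : Ω → ℝ} (mg : Measurable g) :
      Integrable (fun ω => e ω * X j ω * bumpPrimitive α x (g ω)) μ :=
    integrable_mul_of_abs_le (H.integrable_mul_of_mem_compl_neighbors ie me hj)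
      ((continuous_bumpPrimitive α x).measurable.comp mg)
      fun ω => abs_bumpPrimitive_le hα x (g ω)
  have iW := integrable_F (H.measurable_blockSum Finset.univ)
  have iAc := integrable_F (H.measurable_blockSum (A j)ᶜ)
  have iY := integrable_F ((H.measurable_blockSum Finset.univ).fun_sub
    (H.measurable_truncBlockSum (A j)))
  have hAj := H.A_subset_compl_C hj
  have indep : IndepFun e (fun ω => |X j ω| * |blockSum X (A j) ω - truncBlockSum X (A j) ω|) μ :=
    H.indepFun_block me ((measurable_abs.comp (measurable_blockSigma X (H.mem_compl_C hj))).mul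
      (measurable_abs.comp ((measurable_blockSum_blockSigma X hAj).sub
        (measurable_truncBlockSum_blockSigma X hAj))))
  have iE : Integrable (fun ω =>
      e ω * (|X j ω| * |blockSum X (A j) ω - truncBlockSum X (A j) ω|)) μ :=
    indep.integrable_mul ie (H.integrable_abs_mul_abs_sub_truncBlockSum j)
  rw [← indep.integral_fun_mul_eq_mul_integral ie.1
    (H.integrable_abs_mul_abs_sub_truncBlockSum j).1,
    ← sub_zero (∫ ω, e ω * X j ω * bumpPrimitive α x (blockSum X Finset.univ ω) ∂μ),
    ← H.integral_mul_bumpPrimitive_compl_eq_zero me α x hj,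
    ← integral_sub iW iAc, ← integral_add (iW.sub' iAc) iE]
  refine integral_mono (by simpa only [mul_sub] using iW.sub' iY)
    ((iW.sub' iAc).fun_add iE) fun ω => ?_
  beta_reduce
  linarith [mul_le_mul_of_nonneg_left (mul_bumpPrimitive_sub_le hα X (A j) x (X j ω) ω) (e0 ω)]

lemma sum_integral_mul_bumpPrimitive_le (H : NormalizedLocalDependence μ X A B C p κ b)
    (hα : 0 < α) (e0 : ∀ ω, 0 ≤ e ω) (ie : Integrable e μ)
    (me : Measurable[blockSigma X (B i)] e) (x : ℝ) :
    ∑ j ∈ (neighbors B C i)ᶜ,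
        ∫ ω, e ω * X j ω * bumpPrimitive α x (blockSum X Finset.univ ω) ∂μ ≤
      5 / 2 * α * ∫ ω, e ω ∂μ := by
  set J := (neighbors B C i)ᶜ
  have integrable_summand : ∀ j ∈ J,
      Integrable (fun ω => e ω * X j ω * bumpPrimitive α x (blockSum X Finset.univ ω)) μ :=
    fun j hj => integrable_mul_of_abs_le (H.integrable_mul_of_mem_compl_neighbors ie me hj)
      ((continuous_bumpPrimitive α x).measurable.comp (H.measurable_blockSum _))
      fun ω => abs_bumpPrimitive_le hα x _
  have indep : IndepFun e (fun ω => |blockSum X J ω|) μ :=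
    H.indepFun_block me (measurable_abs.comp
      (measurable_blockSum_blockSigma X fun j hj => H.mem_compl_C hj))
  have iJ := (H.integrable_blockSum J).abs
  have far_sum : ∫ ω, |blockSum X J ω| ∂μ ≤ 5 / 4 :=
    H.integral_abs_blockSum_compl_le (H.card_neighbors_le i)
  have I0 : 0 ≤ ∫ ω, e ω ∂μ := integral_nonneg e0
  calc ∑ j ∈ J, ∫ ω, e ω * X j ω * bumpPrimitive α x (blockSum X Finset.univ ω) ∂μ
      = ∫ ω, ∑ j ∈ J, e ω * X j ω * bumpPrimitive α x (blockSum X Finset.univ ω) ∂μ :=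
        (integral_finsetSum _ integrable_summand).symm
    _ ≤ ∫ ω, 2 * α * (e ω * |blockSum X J ω|) ∂μ := by
        refine integral_mono (integrable_finsetSum _ integrable_summand)
          ((indep.integrable_mul ie iJ).const_mul _) fun ω => (le_abs_self _).trans ?_
        rw [← Finset.sum_mul, ← Finset.mul_sum, abs_mul, abs_mul, abs_of_nonneg (e0 ω), mul_comm]
        exact mul_le_mul_of_nonneg_right (abs_bumpPrimitive_le hα x _)
          (mul_nonneg (e0 ω) (abs_nonneg _))
    _ = 2 * α * ((∫ ω, e ω ∂μ) * ∫ ω, |blockSum X J ω| ∂μ) := by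
        rw [integral_const_mul, indep.integral_fun_mul_eq_mul_integral ie.1 iJ.1]
    _ ≤ 2 * α * ((∫ ω, e ω ∂μ) * (5 / 4)) := by gcongr
    _ = 5 / 2 * α * ∫ ω, e ω ∂μ := by ring

lemma integral_concentrationTest_le (H : NormalizedLocalDependence μ X A B C p κ b)
    (hα : 0 < α) (e0 : ∀ ω, 0 ≤ e ω) (ie : Integrable e μ)
    (me : Measurable[blockSigma X (B i)] e) (x : ℝ) :
    ∫ t, concentrationTest μ X A B C i e α x t ∂windowMeasure ≤
      (5 / 2 * α + b) * ∫ ω, e ω ∂μ := by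
  have mW := H.measurable_blockSum Finset.univ
  calc ∫ t, concentrationTest μ X A B C i e α x t ∂windowMeasure
      = ∑ j ∈ (neighbors B C i)ᶜ, ∫ ω, e ω * X j ω *
          (bumpPrimitive α x (blockSum X Finset.univ ω) -
            bumpPrimitive α x (blockSum X Finset.univ ω - truncBlockSum X (A j) ω)) ∂μ := by
        refine (integral_finsetSum _ fun j hj => integrable_integral_mul
          (H.integrable_mul_of_mem_compl_neighbors ie me hj) ((measurable_bump_add mW α x).mul
            (measurable_incrementKernel_comp (H.measurable_truncBlockSum _)))
          fun _ => abs_bump_mul_incrementKernel_le_one hα _ _ _ _).trans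
          (Finset.sum_congr rfl fun j hj => ?_)
        exact integral_integral_mul_bump_mul_incrementKernel hα
          (H.integrable_mul_of_mem_compl_neighbors ie me hj) mW (H.measurable_truncBlockSum _)
          (abs_truncBlockSum_le_one X _) x
    _ ≤ 5 / 2 * α * (∫ ω, e ω ∂μ) + (∫ ω, e ω ∂μ) * b := by
        refine (Finset.sum_le_sum fun j hj =>
          H.integral_mul_bumpPrimitive_sub_le hα e0 ie me x hj).trans ?_
        rw [Finset.sum_add_distrib, ← Finset.mul_sum]
        gcongr
        · exact H.sum_integral_mul_bumpPrimitive_le hα e0 ie me x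
        · exact integral_nonneg e0
        · exact H.sum_integral_abs_mul_abs_sub_truncBlockSum_le _
    _ = (5 / 2 * α + b) * ∫ ω, e ω ∂μ := by ring

lemma abs_sum_integral_truncKernel_mul_abs_le (H : NormalizedLocalDependence μ X A B C p κ b)
    (J : Finset ι) (t : ℝ) :
    |∑ j ∈ J, ∫ ω, truncKernel X A j t ω ∂μ| * |t| ≤
      ∑ j ∈ J, ∫ ω, |X j ω| * |truncBlockSum X (A j) ω| *
        |incrementKernel (truncBlockSum X (A j) ω) t| ∂μ := by
  calc |∑ j ∈ J, ∫ ω, truncKernel X A j t ω ∂μ| * |t|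
      ≤ (∑ j ∈ J, ∫ ω, |truncKernel X A j t ω| ∂μ) * |t| := by
        gcongr
        exact (Finset.abs_sum_le_sum_abs _ _).trans
          (Finset.sum_le_sum fun j _ => abs_integral_le_integral_abs)
    _ = ∑ j ∈ J, ∫ ω, |truncKernel X A j t ω| * |t| ∂μ := by
        simp_rw [Finset.sum_mul, integral_mul_const]
    _ ≤ _ := by
        refine Finset.sum_le_sum fun j _ => integral_mono
          (((H.memLp_two_truncKernel j t).integrable one_le_two).abs.mul_const _)
          (integrable_mul_of_abs_le (H.integrable_abs_mul_abs_truncBlockSum j)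
            (measurable_incrementKernel.comp
              ((H.measurable_truncBlockSum _).prodMk measurable_const)).abs
            fun _ => abs_abs_incrementKernel_le_one _ _) fun ω => ?_
        beta_reduce
        rw [truncKernel, abs_mul, mul_assoc, mul_assoc, mul_comm |truncBlockSum X (A j) ω|]
        exact mul_le_mul_of_nonneg_left (abs_incrementKernel_mul_abs_le _ _) (abs_nonneg _)

lemma concentrationTest_eq_integral (H : NormalizedLocalDependence μ X A B C p κ b) (hα : 0 < α)
    (ie : Integrable e μ) (me : Measurable[blockSigma X (B i)] e) (x t : ℝ) :
    concentrationTest μ X A B C i e α x t =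
      ∫ ω, e ω * bump α x (blockSum X Finset.univ ω + t) *
        ∑ j ∈ (neighbors B C i)ᶜ, truncKernel X A j t ω ∂μ := by
  have mbump : Measurable fun ω => bump α x (blockSum X Finset.univ ω + t) :=
    (continuous_bump α x).measurable.comp ((H.measurable_blockSum _).add_const t)
  have mker (j : ι) : Measurable fun ω => incrementKernel (truncBlockSum X (A j) ω) t :=
    measurable_incrementKernel.comp ((H.measurable_truncBlockSum _).prodMk measurable_const)
  have integrable_summand : ∀ j ∈ (neighbors B C i)ᶜ, Integrable (fun ω => e ω * X j ω *
      (bump α x (blockSum X Finset.univ ω + t) *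
        incrementKernel (truncBlockSum X (A j) ω) t)) μ :=
    fun j hj => integrable_mul_of_abs_le (H.integrable_mul_of_mem_compl_neighbors ie me hj)
      (mbump.mul (mker j)) fun ω => abs_bump_mul_incrementKernel_le_one hα _ _ _ _
  rw [concentrationTest, ← integral_finsetSum _ integrable_summand]
  refine integral_congr_ae (ae_of_all _ fun ω => ?_)
  simp only [Finset.mul_sum, truncKernel]
  exact Finset.sum_congr rfl fun j _ => by ring

lemma mul_integral_bump_sub_le_concentrationTest (H : NormalizedLocalDependence μ X A B C p κ b)
    (hα : 0 < α) (e0 : ∀ ω, 0 ≤ e ω) (ie : Integrable e μ)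
    (me : Measurable[blockSigma X (B i)] e) (x t : ℝ) :
    (∑ j ∈ (neighbors B C i)ᶜ, ∫ ω, truncKernel X A j t ω ∂μ) *
        (∫ ω, e ω * bump α x (blockSum X Finset.univ ω + t) ∂μ) -
      (1 / 16 * (∫ ω, e ω * bump α x (blockSum X Finset.univ ω + t) ^ 2 ∂μ) +
        4 * ((∫ ω, e ω ∂μ) * (κ * ∑ j ∈ (neighbors B C i)ᶜ,
          ∫ ω, X j ω ^ 2 * |incrementKernel (truncBlockSum X (A j) ω) t| ∂μ))) ≤
      concentrationTest μ X A B C i e α x t := by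
  set J := (neighbors B C i)ᶜ
  set M := ∑ j ∈ J, ∫ ω, truncKernel X A j t ω ∂μ
  have mbump : Measurable fun ω => bump α x (blockSum X Finset.univ ω + t) :=
    (continuous_bump α x).measurable.comp ((H.measurable_blockSum _).add_const t)
  have msum := H.measurable_sum_truncKernel_blockSigma i t
  have isum := H.memLp_two_sum_truncKernel J t
  have indep_sum : IndepFun e (fun ω => ∑ j ∈ J, truncKernel X A j t ω) μ :=
    H.indepFun_block me msum
  have indep_sq : IndepFun e (fun ω => (∑ j ∈ J, truncKernel X A j t ω - M) ^ 2) μ :=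
    H.indepFun_block me ((msum.sub_const M).pow_const 2)
  have isq : Integrable (fun ω => (∑ j ∈ J, truncKernel X A j t ω - M) ^ 2) μ :=
    (isum.sub (memLp_const M)).integrable_sq
  have integrable_product : Integrable (fun ω =>
      e ω * bump α x (blockSum X Finset.univ ω + t) * ∑ j ∈ J, truncKernel X A j t ω) μ := by
    simpa only [mul_right_comm, Pi.mul_apply] using integrable_mul_of_abs_le
      (indep_sum.integrable_mul ie (isum.integrable one_le_two)) mbump
      fun ω => abs_bump_le_one hα x _
  have amgm := mul_integral_sub_le_integral_mul e0
    (integrable_mul_of_abs_le ie mbump fun ω => abs_bump_le_one hα x _)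
    (integrable_mul_of_abs_le ie (mbump.pow_const 2) fun ω => abs_bump_sq_le_one hα x _)
    (indep_sq.integrable_mul ie isq)
    integrable_product
  rw [indep_sq.integral_fun_mul_eq_mul_integral ie.1 isq.1] at amgm
  rw [H.concentrationTest_eq_integral hα ie me]
  linarith [mul_le_mul_of_nonneg_left (H.integral_sum_truncKernel_sub_sq_le J t)
    (integral_nonneg (μ := μ) e0)]

lemma le_concentrationTest (H : NormalizedLocalDependence μ X A B C p κ b) (hα : 0 < α)
    (hδ : 0 ≤ δ)
    (hC : WeightedConcentration μ (blockSigma X (B i)) (blockSum X Finset.univ) α δ)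
    (e0 : ∀ ω, 0 ≤ e ω) (ie : Integrable e μ) (me : Measurable[blockSigma X (B i)] e) (x : ℝ)
    {t : ℝ} (ht : |t| ≤ 1) :
    (∑ j ∈ (neighbors B C i)ᶜ, ∫ ω, truncKernel X A j t ω ∂μ) *
        (∫ ω, e ω * bump α x (blockSum X Finset.univ ω) ∂μ) -
      (4 * δ / α * (∫ ω, e ω ∂μ) * (∑ j ∈ (neighbors B C i)ᶜ, ∫ ω, |X j ω| *
          |truncBlockSum X (A j) ω| * |incrementKernel (truncBlockSum X (A j) ω) t| ∂μ) +
        1 / 16 * (∫ ω, e ω * bump α x (blockSum X Finset.univ ω + t) ^ 2 ∂μ) +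
        4 * (∫ ω, e ω ∂μ) * κ * ∑ j ∈ (neighbors B C i)ᶜ,
          ∫ ω, X j ω ^ 2 * |incrementKernel (truncBlockSum X (A j) ω) t| ∂μ) ≤
      concentrationTest μ X A B C i e α x t := by
  have unshifted := H.mul_integral_bump_sub_le_concentrationTest hα e0 ie me x t
  set I := ∫ ω, e ω ∂μ
  set M := ∑ j ∈ (neighbors B C i)ᶜ, ∫ ω, truncKernel X A j t ω ∂μ
  set P := ∫ ω, e ω * bump α x (blockSum X Finset.univ ω) ∂μ
  set P' := ∫ ω, e ω * bump α x (blockSum X Finset.univ ω + t) ∂μ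
  have I0 : 0 ≤ I := integral_nonneg e0
  have shift : |P' - P| ≤ 4 * δ / α * |t| * I :=
    hC.abs_integral_mul_bump_sub_le hα (blockSigma_le H.measurable _) (H.measurable_blockSum _)
      e0 ie me x ht
  have shift_error : |M| * |P' - P| ≤ 4 * δ / α * I * ∑ j ∈ (neighbors B C i)ᶜ, ∫ ω, |X j ω| *
      |truncBlockSum X (A j) ω| * |incrementKernel (truncBlockSum X (A j) ω) t| ∂μ :=
    calc |M| * |P' - P| ≤ |M| * (4 * δ / α * |t| * I) := by gcongr
      _ = 4 * δ / α * I * (|M| * |t|) := by ring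
      _ ≤ _ := by
        gcongr
        exact H.abs_sum_integral_truncKernel_mul_abs_le _ t
  rw [← abs_mul] at shift_error
  linarith [neg_abs_le (M * (P' - P))]

lemma le_integral_concentrationTest (H : NormalizedLocalDependence μ X A B C p κ b) (hα : 0 < α)
    (hδ : 0 ≤ δ)
    (hC : WeightedConcentration μ (blockSigma X (B i)) (blockSum X Finset.univ) α δ)
    (e0 : ∀ ω, 0 ≤ e ω) (ie : Integrable e μ) (me : Measurable[blockSigma X (B i)] e) (x : ℝ) :
    (15 / 16 - 1 / 75) * (∫ ω, e ω * bump α x (blockSum X Finset.univ ω) ∂μ) -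
        (4 * δ / α * b + 3 / 16 * α + 4 * b) * ∫ ω, e ω ∂μ ≤
      ∫ t, concentrationTest μ X A B C i e α x t ∂windowMeasure := by
  have mW := H.measurable_blockSum Finset.univ
  have mker (j : ι) := measurable_incrementKernel_comp (H.measurable_truncBlockSum (A j))
  have iXY (j : ι) := H.integrable_abs_mul_abs_truncBlockSum j
  set J := (neighbors B C i)ᶜ
  have integrable_mean (j : ι) :
      Integrable (fun t => ∫ ω, truncKernel X A j t ω ∂μ) windowMeasure :=
    integrable_integral_mul (H.integrable j) (mker j) fun _ => abs_incrementKernel_le_one _ _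
  have integrable_abs_kernel (j : ι) {g : Ω → ℝ} (ig : Integrable g μ) : Integrable (fun t =>
      ∫ ω, g ω * |incrementKernel (truncBlockSum X (A j) ω) t| ∂μ) windowMeasure :=
    integrable_integral_mul ig (mker j).abs fun _ => abs_abs_incrementKernel_le_one _ _
  have integrated := integral_mul_sub_le_of_ae_le
    (integrable_finsetSum J fun j _ => integrable_mean j)
    (integrable_finsetSum J fun j _ => integrable_abs_kernel j (iXY j))
    (integrable_integral_mul ie ((measurable_bump_add mW α x).pow_const 2)
      fun _ => abs_bump_sq_le_one hα _ _)
    (integrable_finsetSum J fun j _ => integrable_abs_kernel j (H.integrable_sq j))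
    (H.integrable_concentrationTest hα ie me x)
    (ae_restrict_of_forall_mem measurableSet_Icc fun t ht =>
      H.le_concentrationTest hα hδ hC e0 ie me x (abs_le.2 ht))
  rw [integral_finsetSum J fun j _ => integrable_mean j,
    integral_finsetSum J fun j _ => integrable_abs_kernel j (iXY j),
    integral_finsetSum J fun j _ => integrable_abs_kernel j (H.integrable_sq j)] at integrated
  simp_rw [truncKernel, integral_integral_mul_incrementKernel (H.integrable _)
    (H.measurable_truncBlockSum _) (abs_truncBlockSum_le_one X _),
    integral_integral_mul_abs_incrementKernel (iXY _) (H.measurable_truncBlockSum _)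
    (abs_truncBlockSum_le_one X _), integral_integral_mul_abs_incrementKernel (H.integrable_sq _)
    (H.measurable_truncBlockSum _) (abs_truncBlockSum_le_one X _)] at integrated
  have I0 : 0 ≤ ∫ ω, e ω ∂μ := integral_nonneg e0
  have P0 : 0 ≤ ∫ ω, e ω * bump α x (blockSum X Finset.univ ω) ∂μ :=
    integral_nonneg fun ω => mul_nonneg (e0 ω) (bump_nonneg hα x _)
  have main_term := mul_le_mul_of_nonneg_right
    (H.le_sum_integral_mul_truncBlockSum (H.card_neighbors_le i)) P0
  have shift_term := mul_le_mul_of_nonneg_left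
    (H.sum_integral_abs_mul_abs_truncBlockSum_mul_le J)
    (show 0 ≤ 4 * δ / α * ∫ ω, e ω ∂μ by positivity)
  have variance_term := mul_le_mul_of_nonneg_left
    (H.natCast_mul_sum_integral_sq_mul_abs_truncBlockSum_le J)
    (show 0 ≤ 4 * ∫ ω, e ω ∂μ by positivity)
  linarith [integral_integral_mul_bump_sq_le hα e0 ie mW x]

lemma weightedConcentration_step (H : NormalizedLocalDependence μ X A B C p κ b) (hδ : 0 ≤ δ)
    (hC : WeightedConcentration μ (blockSigma X (B i)) (blockSum X Finset.univ) (16 * b) δ) :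
    WeightedConcentration μ (blockSigma X (B i)) (blockSum X Finset.univ) (16 * b)
      (52 * b + 28 / 100 * δ) := by
  intro e e0 ie me x
  have b0 := H.pos
  have hα : 0 < 16 * b := by positivity
  have mW := H.measurable_blockSum Finset.univ
  have bounds := (H.le_integral_concentrationTest hα hδ hC e0 ie me x).trans
    (H.integral_concentrationTest_le hα e0 ie me x)
  have indicator_le_bump :
      ∫ ω, e ω * (Set.Icc x (x + 16 * b)).indicator 1 (blockSum X Finset.univ ω) ∂μ ≤
        ∫ ω, e ω * bump (16 * b) x (blockSum X Finset.univ ω) ∂μ :=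
    integral_mono
      (integrable_mul_of_abs_le ie ((measurable_one.indicator measurableSet_Icc).comp mW)
        fun ω => abs_indicator_one_le_one _ _)
      (integrable_mul_of_abs_le ie ((continuous_bump _ x).measurable.comp mW)
        fun ω => abs_bump_le_one hα x _)
      fun ω => mul_le_mul_of_nonneg_left (indicator_Icc_le_bump hα x _) (e0 ω)
  have shift_coeff : 4 * δ / (16 * b) * b = δ / 4 := by
    field_simp
    ring
  have bI0 : 0 ≤ b * ∫ ω, e ω ∂μ := mul_nonneg b0.le (integral_nonneg e0)
  have δI0 : 0 ≤ δ * ∫ ω, e ω ∂μ := mul_nonneg hδ (integral_nonneg e0)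
  rw [shift_coeff] at bounds
  linarith

theorem weightedConcentration (H : NormalizedLocalDependence μ X A B C p κ b) (i : ι) :
    WeightedConcentration μ (blockSigma X (B i)) (blockSum X Finset.univ) (16 * b) (80 * b) := by
  have b0 := H.pos
  have iterate (n : ℕ) : WeightedConcentration μ (blockSigma X (B i)) (blockSum X Finset.univ)
      (16 * b) (73 * b + (28 / 100) ^ n) := by
    induction n with
    | zero => exact (WeightedConcentration.one (H.measurable_blockSum _)).mono (by simp [b0.le])
    | succ n ih =>
      refine (H.weightedConcentration_step (by positivity) ih).mono ?_
      rw [pow_succ]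
      linarith
  obtain ⟨n, hn⟩ := exists_pow_lt_of_lt_one (show 0 < 7 * b by positivity)
    (show (28 / 100 : ℝ) < 1 by norm_num)
  exact (iterate n).mono (by linarith)

end NormalizedLocalDependence

/-! ### Stein's method under local dependence -/

section Oscillation

lemma min_one_le_rpow {r u q : ℝ} (hr : 0 ≤ r) (h : r ≤ u) (hq : 0 < q) (hq' : q ≤ 1) :
    min 1 r ≤ u ^ q :=
  (le_max_right _ _).trans ((le_abs_self _).trans
    (abs_clamp_le_rpow ((abs_of_nonneg hr).trans_le h) hq hq'))

lemma min_one_sq_le_rpow {u q : ℝ} (hu : 0 ≤ u) (hq : 0 < q) (hq' : q ≤ 1) :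
    min 1 (u ^ 2) ≤ u ^ q := by
  refine le_trans (le_min (min_le_left _ _) ?_) (min_one_le_rpow hu le_rfl hq hq')
  rcases le_total u 1 with h | h
  · exact (min_le_right _ _).trans (pow_le_of_le_one hu h two_ne_zero)
  · exact (min_le_left _ _).trans h

/-- A bound for the oscillation of the derivative of the Stein solution of a smoothed indicator
between `w` and any point at distance at most `r`. Here `v` and `u` satisfy `|w| ≤ |v| + u` and
`r ≤ u`: in the application `v` is the part of `w = W` outside a block, and `u` dominates the
part inside. -/
noncomputable def steinOscBound (α z w v r u : ℝ) : ℝ :=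
  (ramp α z (w + min 1 r) - ramp α z (w - min 1 r)) + min 1 r + (2 + 2 * |v|) * min 1 r +
    2 * min 1 (u ^ 2)

variable {α z w v r u s : ℝ}

lemma min_two_mul_le (hs : |s| ≤ r) (hr : r ≤ u) (hw : |w| ≤ |v| + u) :
    min 2 (|s| * (2 + 2 * |w|)) ≤ (2 + 2 * |v|) * min 1 r + 2 * min 1 (u ^ 2) := by
  have r0 : 0 ≤ r := (abs_nonneg s).trans hs
  have u0 : 0 ≤ u := r0.trans hr
  rcases le_total 1 u with h | h
  · rw [min_eq_left (one_le_pow₀ h)]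
    have nonneg : 0 ≤ (2 + 2 * |v|) * min 1 r := mul_nonneg (by positivity) (by positivity)
    exact (min_le_left _ _).trans (by linarith)
  · rw [min_eq_right (pow_le_one₀ u0 h), min_eq_right (hr.trans h)]
    calc min 2 (|s| * (2 + 2 * |w|)) ≤ |s| * (2 + 2 * |w|) := min_le_right _ _
      _ ≤ r * (2 + 2 * (|v| + u)) := by gcongr
      _ = (2 + 2 * |v|) * r + 2 * (r * u) := by ring
      _ ≤ (2 + 2 * |v|) * r + 2 * (u * u) := by gcongr
      _ = (2 + 2 * |v|) * r + 2 * u ^ 2 := by rw [sq]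

lemma abs_ramp_add_sub_ramp_le_min (hα : 0 < α) (z w : ℝ) (hs : |s| ≤ r) :
    |ramp α z (w + s) - ramp α z w| ≤
      (ramp α z (w + min 1 r) - ramp α z (w - min 1 r)) + min 1 r := by
  rcases le_total 1 r with h | h
  · rw [min_eq_left h]
    have mono : ramp α z (w - 1) ≤ ramp α z (w + 1) := ramp_mono hα z (by linarith)
    linarith [abs_ramp_sub_ramp_le_one α z (w + s) w]
  · rw [min_eq_right h]
    linarith [abs_ramp_add_sub_ramp_le hα z w hs, (abs_nonneg s).trans hs]

lemma abs_steinDeriv_smoothIndicator_add_sub_le (hα : 0 < α) (hs : |s| ≤ r) (hr : r ≤ u)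
    (hw : |w| ≤ |v| + u) :
    |steinDeriv (smoothIndicator α z) (w + s) - steinDeriv (smoothIndicator α z) w| ≤
      steinOscBound α z w v r u := by
  set f := steinSol (smoothIndicator α z)
  have split : steinDeriv (smoothIndicator α z) (w + s) - steinDeriv (smoothIndicator α z) w =
      ((w + s) * f (w + s) - w * f w) - (ramp α z (w + s) - ramp α z w) := by
    simp only [steinDeriv, smoothIndicator, f]
    ring
  rw [split, steinOscBound]
  linarith [abs_sub ((w + s) * f (w + s) - w * f w) (ramp α z (w + s) - ramp α z w),
    (steinTest_smoothIndicator α z).abs_mul_steinSol_sub_le w s, min_two_mul_le hs hr hw,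
    abs_ramp_add_sub_ramp_le_min hα z w hs]

end Oscillation

lemma integrable_mul_min_one {Ω : Type*} [MeasurableSpace Ω] {μ : Measure Ω} {G U : Ω → ℝ}
    (iG : Integrable G μ) (mU : Measurable U) (hU : ∀ ω, 0 ≤ U ω) :
    Integrable (fun ω => G ω * min 1 (U ω)) μ :=
  integrable_mul_of_abs_le iG (measurable_const.min mU) fun ω =>
    (abs_of_nonneg (le_min zero_le_one (hU ω))).trans_le (min_le_left 1 (U ω))

section

variable {Ω ι : Type*} [Fintype ι] [DecidableEq ι]

/-- The oscillation bound `steinOscBound` at `W = blockSum X univ`, for a ramp of width `16 * b`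
and increments dominated by the block `B j`. -/
noncomputable def steinOsc (X : ι → Ω → ℝ) (B C : ι → Finset ι) (b : ℝ) (j : ι) (z : ℝ) (ω : Ω) :
    ℝ :=
  steinOscBound (16 * b) z (blockSum X Finset.univ ω) (blockSum X (C j)ᶜ ω)
    (blockAbsSum X (B j) ω) (blockAbsSum X (C j) ω)

lemma mul_steinOsc_eq (G : Ω → ℝ) (X : ι → Ω → ℝ) (B C : ι → Finset ι) (b : ℝ) (j : ι) (z : ℝ)
    (ω : Ω) :
    G ω * steinOsc X B C b j z ω =
      G ω * (ramp (16 * b) z (blockSum X Finset.univ ω + min 1 (blockAbsSum X (B j) ω)) -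
        ramp (16 * b) z (blockSum X Finset.univ ω - min 1 (blockAbsSum X (B j) ω))) +
      3 * (G ω * min 1 (blockAbsSum X (B j) ω)) +
      2 * (G ω * min 1 (blockAbsSum X (B j) ω) * |blockSum X (C j)ᶜ ω|) +
      2 * (G ω * min 1 (blockAbsSum X (C j) ω ^ 2)) := by
  rw [steinOsc, steinOscBound]
  ring

end

namespace NormalizedLocalDependence

variable {Ω ι : Type*} [mΩ : MeasurableSpace Ω] [Fintype ι] [DecidableEq ι] {μ : Measure Ω}
  {X : ι → Ω → ℝ} {A B C : ι → Finset ι} {p : ℝ} {κ : ℕ} {b : ℝ} {j : ι} {G : Ω → ℝ}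

lemma abs_steinDeriv_add_sub_le_steinOsc (H : NormalizedLocalDependence μ X A B C p κ b) (z : ℝ)
    (ω : Ω) {s : ℝ} (hs : |s| ≤ blockAbsSum X (B j) ω) :
    |steinDeriv (smoothIndicator (16 * b) z) (blockSum X Finset.univ ω + s) -
        steinDeriv (smoothIndicator (16 * b) z) (blockSum X Finset.univ ω)| ≤
      steinOsc X B C b j z ω := by
  have b0 := H.pos
  refine abs_steinDeriv_smoothIndicator_add_sub_le (by positivity) hs
    (blockAbsSum_mono X (H.B_subset_C j) ω) ?_
  rw [← blockSum_add_blockSum_compl X (C j) ω, add_comm]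
  exact (abs_add_le _ _).trans
    (add_le_add_right (abs_blockSum_le_blockAbsSum X subset_rfl ω) _)

lemma abs_steinDeriv_compl_sub_le_steinOsc (H : NormalizedLocalDependence μ X A B C p κ b)
    (j : ι) (z : ℝ) (ω : Ω) :
    |steinDeriv (smoothIndicator (16 * b) z) (blockSum X (B j)ᶜ ω) -
        steinDeriv (smoothIndicator (16 * b) z) (blockSum X Finset.univ ω)| ≤
      steinOsc X B C b j z ω := by
  have osc := H.abs_steinDeriv_add_sub_le_steinOsc z ω (s := -blockSum X (B j) ω)
    ((abs_neg _).trans_le (abs_blockSum_le_blockAbsSum X subset_rfl ω))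
  rwa [← sub_eq_add_neg, sub_eq_of_eq_add' (blockSum_add_blockSum_compl X (B j) ω).symm] at osc

lemma abs_mul_steinSol_sub_sub_le (H : NormalizedLocalDependence μ X A B C p κ b) (j : ι)
    (z : ℝ) (ω : Ω) :
    |X j ω * steinSol (smoothIndicator (16 * b) z) (blockSum X Finset.univ ω) -
        X j ω * steinSol (smoothIndicator (16 * b) z) (blockSum X (A j)ᶜ ω) -
        X j ω * blockSum X (A j) ω *
          steinDeriv (smoothIndicator (16 * b) z) (blockSum X (B j)ᶜ ω)| ≤
      2 * (|X j ω * blockSum X (A j) ω| * steinOsc X B C b j z ω) := by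
  set f := steinSol (smoothIndicator (16 * b) z)
  set f' := steinDeriv (smoothIndicator (16 * b) z)
  set W := blockSum X Finset.univ ω
  set S := blockSum X (A j) ω
  have taylor : |f W - f (W - S) - S * f' W| ≤ |S| * steinOsc X B C b j z ω :=
    (steinTest_smoothIndicator _ z).abs_steinSol_sub_sub_mul_le
      (abs_blockSum_le_blockAbsSum X (H.A_subset_B j) ω)
      fun _ hs => H.abs_steinDeriv_add_sub_le_steinOsc z ω hs
  rw [show W - S = blockSum X (A j)ᶜ ω from
    sub_eq_of_eq_add' (blockSum_add_blockSum_compl X (A j) ω).symm] at taylor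
  calc |X j ω * f W - X j ω * f (blockSum X (A j)ᶜ ω) - X j ω * S * f' (blockSum X (B j)ᶜ ω)|
      = |X j ω * (f W - f (blockSum X (A j)ᶜ ω) - S * f' W) -
          X j ω * S * (f' (blockSum X (B j)ᶜ ω) - f' W)| := by ring_nf
    _ ≤ |X j ω| * |f W - f (blockSum X (A j)ᶜ ω) - S * f' W| +
          |X j ω * S| * |f' (blockSum X (B j)ᶜ ω) - f' W| := by
        rw [← abs_mul, ← abs_mul]
        exact abs_sub _ _
    _ ≤ |X j ω| * (|S| * steinOsc X B C b j z ω) + |X j ω * S| * steinOsc X B C b j z ω := by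
        gcongr
        exact H.abs_steinDeriv_compl_sub_le_steinOsc j z ω
    _ = 2 * (|X j ω * S| * steinOsc X B C b j z ω) := by
        rw [abs_mul]
        ring

lemma measurable_abs_mul_blockSum_blockSigma (H : NormalizedLocalDependence μ X A B C p κ b)
    (j : ι) : Measurable[blockSigma X (B j)] fun ω => |X j ω * blockSum X (A j) ω| :=
  measurable_abs.comp ((measurable_blockSigma X (H.A_subset_B j (H.mem_A j))).mul
    (measurable_blockSum_blockSigma X (H.A_subset_B j)))

lemma abs_mul_blockSum_le (H : NormalizedLocalDependence μ X A B C p κ b) (j : ι) (ω : Ω) :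
    |X j ω * blockSum X (A j) ω| ≤ |X j ω| * blockAbsSum X (C j) ω := by
  rw [abs_mul]
  exact mul_le_mul_of_nonneg_left (abs_blockSum_le_blockAbsSum X (H.A_subset_C j) ω) (abs_nonneg _)

lemma indepFun_mul_min_one_blockSum_compl (H : NormalizedLocalDependence μ X A B C p κ b)
    (mG : Measurable[blockSigma X (B j)] G) :
    IndepFun (fun ω => G ω * min 1 (blockAbsSum X (B j) ω))
      (fun ω => |blockSum X (C j)ᶜ ω|) μ :=
  H.indepFun_block (mG.mul (measurable_const.min (measurable_blockAbsSum_blockSigma X subset_rfl)))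
    (measurable_abs.comp (measurable_blockSum_blockSigma X subset_rfl))

lemma integrable_mul_ramp_sub_ramp (H : NormalizedLocalDependence μ X A B C p κ b)
    (iG : Integrable G μ) (α z : ℝ) (T : Finset ι) :
    Integrable (fun ω => G ω *
      (ramp α z (blockSum X Finset.univ ω + min 1 (blockAbsSum X T ω)) -
        ramp α z (blockSum X Finset.univ ω - min 1 (blockAbsSum X T ω)))) μ := by
  have mW := H.measurable_blockSum Finset.univ
  have mρ : Measurable fun ω => min 1 (blockAbsSum X T ω) :=
    measurable_const.min (H.measurable_blockAbsSum T)
  have mramp := (continuous_ramp α z).measurable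
  exact integrable_mul_of_abs_le iG ((mramp.comp (mW.add mρ)).sub (mramp.comp (mW.sub mρ)))
    fun ω => abs_ramp_sub_ramp_le_one α z _ _

variable [IsProbabilityMeasure μ]

lemma integrable_mul_steinOsc (H : NormalizedLocalDependence μ X A B C p κ b) (j : ι) (z : ℝ)
    (iG : Integrable G μ) (mG : Measurable[blockSigma X (B j)] G) :
    Integrable (fun ω => G ω * steinOsc X B C b j z ω) μ := by
  have iB := integrable_mul_min_one iG (H.measurable_blockAbsSum (B j))
    (blockAbsSum_nonneg X (B j))
  have iC := integrable_mul_min_one iG ((H.measurable_blockAbsSum (C j)).pow_const 2)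
    fun ω => sq_nonneg _
  have iBS := (H.indepFun_mul_min_one_blockSum_compl mG).integrable_mul iB
    (H.integrable_blockSum (C j)ᶜ).abs
  simp_rw [mul_steinOsc_eq]
  exact (((H.integrable_mul_ramp_sub_ramp iG _ z (B j)).add (iB.const_mul 3)).add
    (iBS.const_mul 2)).add (iC.const_mul 2)

lemma integral_mul_steinOsc_eq (H : NormalizedLocalDependence μ X A B C p κ b) (j : ι) (z : ℝ)
    (iG : Integrable G μ) (mG : Measurable[blockSigma X (B j)] G) :
    ∫ ω, G ω * steinOsc X B C b j z ω ∂μ =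
      ∫ ω, G ω * (ramp (16 * b) z (blockSum X Finset.univ ω + min 1 (blockAbsSum X (B j) ω)) -
        ramp (16 * b) z (blockSum X Finset.univ ω - min 1 (blockAbsSum X (B j) ω))) ∂μ +
      3 * ∫ ω, G ω * min 1 (blockAbsSum X (B j) ω) ∂μ +
      2 * ((∫ ω, G ω * min 1 (blockAbsSum X (B j) ω) ∂μ) * ∫ ω, |blockSum X (C j)ᶜ ω| ∂μ) +
      2 * ∫ ω, G ω * min 1 (blockAbsSum X (C j) ω ^ 2) ∂μ := by
  have iB := integrable_mul_min_one iG (H.measurable_blockAbsSum (B j))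
    (blockAbsSum_nonneg X (B j))
  have iC := integrable_mul_min_one iG ((H.measurable_blockAbsSum (C j)).pow_const 2)
    fun ω => sq_nonneg _
  have iS := (H.integrable_blockSum (C j)ᶜ).abs
  have indep := H.indepFun_mul_min_one_blockSum_compl mG
  have iBS : Integrable
      (fun ω => G ω * min 1 (blockAbsSum X (B j) ω) * |blockSum X (C j)ᶜ ω|) μ :=
    indep.integrable_mul iB iS
  have iR := H.integrable_mul_ramp_sub_ramp iG (16 * b) z (B j)
  have iRB := iR.fun_add (iB.const_mul 3)
  simp_rw [mul_steinOsc_eq]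
  rw [integral_add (iRB.fun_add (iBS.const_mul 2)) (iC.const_mul 2),
    integral_add iRB (iBS.const_mul 2), integral_add iR (iB.const_mul 3), integral_const_mul,
    integral_const_mul, integral_const_mul, indep.integral_fun_mul_eq_mul_integral iB.1 iS.1]

lemma integral_mul_steinOsc_le (H : NormalizedLocalDependence μ X A B C p κ b) (j : ι) (z : ℝ)
    (G0 : ∀ ω, 0 ≤ G ω) (iG : Integrable G μ) (mG : Measurable[blockSigma X (B j)] G)
    (iGU : Integrable (fun ω => G ω * blockAbsSum X (C j) ω ^ (p - 2)) μ) :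
    ∫ ω, G ω * steinOsc X B C b j z ω ∂μ ≤
      35 / 2 * ∫ ω, G ω * blockAbsSum X (C j) ω ^ (p - 2) ∂μ := by
  have b0 := H.pos
  have hq : 0 < p - 2 := by linarith [H.two_lt]
  have hq' : p - 2 ≤ 1 := by linarith [H.le_three]
  have min_nonneg (ω : Ω) : 0 ≤ min 1 (blockAbsSum X (B j) ω) :=
    le_min zero_le_one (blockAbsSum_nonneg X _ ω)
  have iB := integrable_mul_min_one iG (H.measurable_blockAbsSum (B j))
    (blockAbsSum_nonneg X (B j))
  have iC := integrable_mul_min_one iG ((H.measurable_blockAbsSum (C j)).pow_const 2)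
    fun ω => sq_nonneg _
  have ramp_term := (H.weightedConcentration j).integral_mul_ramp_sub_ramp_le (by positivity)
    (blockSigma_le H.measurable _) (H.measurable_blockSum _) G0 iG mG min_nonneg
    (fun ω => min_le_left _ _)
    (measurable_const.min (measurable_blockAbsSum_blockSigma X subset_rfl)) z
  have coeff : 2 * (80 * b) / (16 * b) = 10 := by
    field_simp
    norm_num
  rw [coeff] at ramp_term
  have B_term : ∫ ω, G ω * min 1 (blockAbsSum X (B j) ω) ∂μ ≤
      ∫ ω, G ω * blockAbsSum X (C j) ω ^ (p - 2) ∂μ :=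
    integral_mono iB iGU fun ω => mul_le_mul_of_nonneg_left (min_one_le_rpow
      (blockAbsSum_nonneg X _ ω) (blockAbsSum_mono X (H.B_subset_C j) ω) hq hq') (G0 ω)
  have C_term : ∫ ω, G ω * min 1 (blockAbsSum X (C j) ω ^ 2) ∂μ ≤
      ∫ ω, G ω * blockAbsSum X (C j) ω ^ (p - 2) ∂μ :=
    integral_mono iC iGU fun ω => mul_le_mul_of_nonneg_left
      (min_one_sq_le_rpow (blockAbsSum_nonneg X _ ω) hq hq') (G0 ω)
  have far_term := mul_le_mul_of_nonneg_left
    (H.integral_abs_blockSum_compl_le (H.card_C_le j))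
    (integral_nonneg (μ := μ) fun ω => mul_nonneg (G0 ω) (min_nonneg ω))
  rw [H.integral_mul_steinOsc_eq j z iG mG]
  linarith

lemma integrable_steinOsc (H : NormalizedLocalDependence μ X A B C p κ b) (j : ι) (z : ℝ) :
    Integrable (steinOsc X B C b j z) μ := by
  simpa only [one_mul] using
    H.integrable_mul_steinOsc j z (integrable_const 1) measurable_const

lemma integral_steinOsc_le (H : NormalizedLocalDependence μ X A B C p κ b) (j : ι) (z : ℝ) :
    ∫ ω, steinOsc X B C b j z ω ∂μ ≤ 35 / 2 * ∫ ω, blockAbsSum X (C j) ω ^ (p - 2) ∂μ := by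
  simpa only [one_mul] using
    H.integral_mul_steinOsc_le j z (fun _ => zero_le_one) (integrable_const 1) measurable_const
      (by simpa only [one_mul] using H.integrable_blockAbsSum_rpow_sub_two (C j))

lemma integral_abs_mul_blockSum_mul_steinOsc_le (H : NormalizedLocalDependence μ X A B C p κ b)
    (j : ι) (z : ℝ) :
    ∫ ω, |X j ω * blockSum X (A j) ω| * steinOsc X B C b j z ω ∂μ ≤
      35 / 2 * ∫ ω, |X j ω| * blockAbsSum X (C j) ω * blockAbsSum X (C j) ω ^ (p - 2) ∂μ := by
  have mG := H.measurable_abs_mul_blockSum_blockSigma j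
  have rpow_nonneg (ω : Ω) : 0 ≤ blockAbsSum X (C j) ω ^ (p - 2) :=
    Real.rpow_nonneg (blockAbsSum_nonneg X _ ω) _
  have le_U (ω : Ω) : |X j ω * blockSum X (A j) ω| * blockAbsSum X (C j) ω ^ (p - 2) ≤
      |X j ω| * blockAbsSum X (C j) ω * blockAbsSum X (C j) ω ^ (p - 2) :=
    mul_le_mul_of_nonneg_right (H.abs_mul_blockSum_le j ω) (rpow_nonneg ω)
  have iUU := H.integrable_abs_mul_blockAbsSum_mul_rpow j (T := C j) (T' := C j)
  have iU : Integrable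
      (fun ω => |X j ω * blockSum X (A j) ω| * blockAbsSum X (C j) ω ^ (p - 2)) μ := by
    refine iUU.mono'
      ((mG.mono (blockSigma_le H.measurable _) le_rfl).mul
        ((H.measurable_blockAbsSum _).pow_const _)).aestronglyMeasurable (ae_of_all _ fun ω => ?_)
    rw [Real.norm_of_nonneg (mul_nonneg (abs_nonneg _) (rpow_nonneg ω))]
    exact le_U ω
  refine (H.integral_mul_steinOsc_le j z (fun _ => abs_nonneg _)
    (H.integrable_mul_blockSum j (A j)).abs mG iU).trans ?_
  exact mul_le_mul_of_nonneg_left (integral_mono iU iUU le_U) (by norm_num)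

lemma abs_integral_mul_steinSol_sub_le (H : NormalizedLocalDependence μ X A B C p κ b) (j : ι)
    (z : ℝ) :
    |∫ ω, X j ω * steinSol (smoothIndicator (16 * b) z) (blockSum X Finset.univ ω) ∂μ -
        (∫ ω, X j ω * blockSum X (A j) ω ∂μ) *
          ∫ ω, steinDeriv (smoothIndicator (16 * b) z) (blockSum X (B j)ᶜ ω) ∂μ| ≤
      2 * ∫ ω, |X j ω * blockSum X (A j) ω| * steinOsc X B C b j z ω ∂μ := by
  have test := steinTest_smoothIndicator (16 * b) z
  set f := steinSol (smoothIndicator (16 * b) z)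
  set f' := steinDeriv (smoothIndicator (16 * b) z)
  have mf : Measurable f := test.continuous_steinSol.measurable
  have mf' : Measurable f' := test.continuous_steinDeriv.measurable
  have iXS := H.integrable_mul_blockSum j (A j)
  have iW : Integrable (fun ω => X j ω * f (blockSum X Finset.univ ω)) μ :=
    integrable_mul_of_abs_le (H.integrable j) (mf.comp (H.measurable_blockSum _))
      fun ω => test.abs_steinSol_le _
  have iA : Integrable (fun ω => X j ω * f (blockSum X (A j)ᶜ ω)) μ :=
    integrable_mul_of_abs_le (H.integrable j) (mf.comp (H.measurable_blockSum _))
      fun ω => test.abs_steinSol_le _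
  have iB : Integrable (fun ω => X j ω * blockSum X (A j) ω * f' (blockSum X (B j)ᶜ ω)) μ :=
    integrable_mul_of_abs_le iXS (mf'.comp (H.measurable_blockSum _))
      fun ω => test.abs_steinDeriv_le _
  have orthogonal : ∫ ω, X j ω * f (blockSum X (A j)ᶜ ω) ∂μ = 0 :=
    H.integral_mul_eq_zero j (mf.comp (measurable_blockSum_blockSigma X subset_rfl))
  have indep : IndepFun (fun ω => X j ω * blockSum X (A j) ω)
      (fun ω => f' (blockSum X (B j)ᶜ ω)) μ :=
    indepFun_of_indep (H.indep_B j)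
      ((measurable_blockSigma X (H.mem_A j)).mul (measurable_blockSum_blockSigma X subset_rfl))
      (mf'.comp (measurable_blockSum_blockSigma X subset_rfl))
  rw [← indep.integral_fun_mul_eq_mul_integral iXS.1
      (mf'.comp (H.measurable_blockSum _)).aestronglyMeasurable,
    ← sub_zero (∫ ω, X j ω * f (blockSum X Finset.univ ω) ∂μ), ← orthogonal,
    ← integral_sub iW iA, ← integral_sub (iW.sub' iA) iB, ← integral_const_mul]
  exact abs_integral_le_integral_abs.trans (integral_mono ((iW.sub' iA).sub' iB).abs
    ((H.integrable_mul_steinOsc j z iXS.abs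
      (H.measurable_abs_mul_blockSum_blockSigma j)).const_mul 2)
    (H.abs_mul_steinSol_sub_sub_le j z))

lemma integrable_steinDeriv_blockSum (H : NormalizedLocalDependence μ X A B C p κ b)
    {h : ℝ → ℝ} (test : SteinTest h) (T : Finset ι) :
    Integrable (fun ω => steinDeriv h (blockSum X T ω)) μ :=
  .of_bound (test.continuous_steinDeriv.measurable.comp
    (H.measurable_blockSum T)).aestronglyMeasurable 2
    (ae_of_all _ fun _ => test.abs_steinDeriv_le _)

lemma abs_integral_steinDeriv_compl_sub_le (H : NormalizedLocalDependence μ X A B C p κ b)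
    (j : ι) (z : ℝ) :
    |∫ ω, steinDeriv (smoothIndicator (16 * b) z) (blockSum X (B j)ᶜ ω) ∂μ -
        ∫ ω, steinDeriv (smoothIndicator (16 * b) z) (blockSum X Finset.univ ω) ∂μ| ≤
      ∫ ω, steinOsc X B C b j z ω ∂μ := by
  have integrable_f' :=
    H.integrable_steinDeriv_blockSum (steinTest_smoothIndicator (16 * b) z)
  rw [← integral_sub (integrable_f' _) (integrable_f' _)]
  exact abs_integral_le_integral_abs.trans (integral_mono
    ((integrable_f' _).sub' (integrable_f' _)).abs (H.integrable_steinOsc j z)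
    (H.abs_steinDeriv_compl_sub_le_steinOsc j z))

lemma abs_integral_mul_steinSol_sub_mul_le (H : NormalizedLocalDependence μ X A B C p κ b)
    (j : ι) (z : ℝ) :
    |∫ ω, X j ω * steinSol (smoothIndicator (16 * b) z) (blockSum X Finset.univ ω) ∂μ -
        (∫ ω, X j ω * blockSum X (A j) ω ∂μ) *
          ∫ ω, steinDeriv (smoothIndicator (16 * b) z) (blockSum X Finset.univ ω) ∂μ| ≤
      35 * ∫ ω, |X j ω| * blockAbsSum X (C j) ω * blockAbsSum X (C j) ω ^ (p - 2) ∂μ +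
        35 / 2 * ((∫ ω, |X j ω| * blockAbsSum X (C j) ω ∂μ) *
          ∫ ω, blockAbsSum X (C j) ω ^ (p - 2) ∂μ) := by
  have first := H.abs_integral_mul_steinSol_sub_le j z
  have second := (H.abs_integral_steinDeriv_compl_sub_le j z).trans (H.integral_steinOsc_le j z)
  have first_le := H.integral_abs_mul_blockSum_mul_steinOsc_le j z
  set F := ∫ ω, X j ω * steinSol (smoothIndicator (16 * b) z) (blockSum X Finset.univ ω) ∂μ
  set D := ∫ ω, steinDeriv (smoothIndicator (16 * b) z) (blockSum X Finset.univ ω) ∂μ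
  set D' := ∫ ω, steinDeriv (smoothIndicator (16 * b) z) (blockSum X (B j)ᶜ ω) ∂μ
  set m := ∫ ω, X j ω * blockSum X (A j) ω ∂μ
  have abs_m_le : |m| ≤ ∫ ω, |X j ω| * blockAbsSum X (C j) ω ∂μ :=
    abs_integral_le_integral_abs.trans (integral_mono (H.integrable_mul_blockSum j (A j)).abs
      (H.integrable_abs_mul_blockAbsSum j _) (H.abs_mul_blockSum_le j))
  calc |F - m * D| = |(F - m * D') + m * (D' - D)| := by ring_nf
    _ ≤ |F - m * D'| + |m| * |D' - D| := (abs_add_le _ _).trans_eq (by rw [abs_mul])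
    _ ≤ 2 * (35 / 2 * ∫ ω, |X j ω| * blockAbsSum X (C j) ω *
            blockAbsSum X (C j) ω ^ (p - 2) ∂μ) +
          (∫ ω, |X j ω| * blockAbsSum X (C j) ω ∂μ) *
            (35 / 2 * ∫ ω, blockAbsSum X (C j) ω ^ (p - 2) ∂μ) := by
        refine add_le_add (first.trans (by linarith))
          (mul_le_mul abs_m_le second (abs_nonneg _) ((abs_nonneg m).trans abs_m_le))
    _ = _ := by ring

lemma integral_sub_eq_sum_sub_sum (H : NormalizedLocalDependence μ X A B C p κ b) {h : ℝ → ℝ}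
    (test : SteinTest h) :
    ∫ ω, h (blockSum X Finset.univ ω) ∂μ - ∫ y, h y ∂gaussianReal 0 1 =
      ∑ j, (∫ ω, X j ω * blockSum X (A j) ω ∂μ) *
          ∫ ω, steinDeriv h (blockSum X Finset.univ ω) ∂μ -
        ∑ j, ∫ ω, X j ω * steinSol h (blockSum X Finset.univ ω) ∂μ := by
  have mW := H.measurable_blockSum Finset.univ
  have integrable_mul_f {g : Ω → ℝ} (ig : Integrable g μ) :
      Integrable (fun ω => g ω * steinSol h (blockSum X Finset.univ ω)) μ :=
    integrable_mul_of_abs_le ig (test.continuous_steinSol.measurable.comp mW)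
      fun ω => test.abs_steinSol_le _
  have integrable_h : Integrable (fun ω => h (blockSum X Finset.univ ω)) μ :=
    .of_bound (test.continuous.measurable.comp mW).aestronglyMeasurable 1
      (ae_of_all _ fun _ => test.abs_le_one _)
  have sum_eq : ∑ j, ∫ ω, X j ω * steinSol h (blockSum X Finset.univ ω) ∂μ =
      ∫ ω, blockSum X Finset.univ ω * steinSol h (blockSum X Finset.univ ω) ∂μ := by
    rw [← integral_finsetSum _ fun j _ => integrable_mul_f (H.integrable j)]
    simp_rw [← Finset.sum_mul]
    rfl
  rw [← Finset.sum_mul, H.sum_integral_mul_blockSum_eq_one, one_mul, sum_eq,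
    ← integral_sub (H.integrable_steinDeriv_blockSum test _)
      (integrable_mul_f (H.integrable_blockSum _))]
  simp only [steinDeriv, add_sub_cancel_left]
  rw [integral_sub integrable_h (integrable_const _), integral_const, probReal_univ, one_smul]

lemma abs_integral_smoothIndicator_sub_le (H : NormalizedLocalDependence μ X A B C p κ b)
    (z : ℝ) :
    |∫ ω, smoothIndicator (16 * b) z (blockSum X Finset.univ ω) ∂μ -
        ∫ y, smoothIndicator (16 * b) z y ∂gaussianReal 0 1| ≤ 105 / 2 * b := by
  rw [H.integral_sub_eq_sum_sub_sum (steinTest_smoothIndicator _ z), abs_sub_comm,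
    ← Finset.sum_sub_distrib]
  refine (Finset.abs_sum_le_sum_abs _ _).trans
    ((Finset.sum_le_sum fun j _ => H.abs_integral_mul_steinSol_sub_mul_le j z).trans ?_)
  rw [Finset.sum_add_distrib, ← Finset.mul_sum, ← Finset.mul_sum]
  linarith [H.sum_integral_abs_mul_blockAbsSum_mul_rpow_le,
    H.sum_integral_mul_integral_blockAbsSum_rpow_le]

theorem abs_measureReal_sub_stdGaussianCDF_le (H : NormalizedLocalDependence μ X A B C p κ b)
    (z : ℝ) :
    |μ.real {ω | blockSum X Finset.univ ω ≤ z} - stdGaussianCDF z| ≤ 75 * b := by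
  have b0 := H.pos
  have mW := H.measurable_blockSum Finset.univ
  have kolmogorov := abs_measureReal_Iic_sub_stdGaussianCDF_le
    (μ.map (blockSum X Finset.univ)) (show 0 < 16 * b by positivity) (ε := 105 / 2 * b)
    (fun y => by
      rw [integral_map mW.aemeasurable
        (steinTest_smoothIndicator _ y).continuous.aestronglyMeasurable]
      exact H.abs_integral_smoothIndicator_sub_le y) z
  rw [map_measureReal_apply mW measurableSet_Iic] at kolmogorov
  exact kolmogorov.trans (by linarith)

end NormalizedLocalDependence

lemma abs_measureReal_sub_stdGaussianCDF_le_one {Ω : Type*} [MeasurableSpace Ω] {μ : Measure Ω}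
    [IsProbabilityMeasure μ] (s : Set Ω) (z : ℝ) : |μ.real s - stdGaussianCDF z| ≤ 1 := by
  rw [stdGaussianCDF_eq]
  exact abs_sub_le_of_nonneg_of_le measureReal_nonneg measureReal_le_one measureReal_nonneg
    measureReal_le_one

theorem stmt_3
    {Ω : Type*} [MeasurableSpace Ω] {μ : Measure Ω} [IsProbabilityMeasure μ]
    {ι : Type*} [Fintype ι] [DecidableEq ι]
    (p : ℝ) (hp : 2 < p ∧ p ≤ 3)
    (X : ι → Ω → ℝ) (A B C : ι → Finset ι)
    (hXmeas : ∀ i, Measurable (X i))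
    (hXmean : ∀ i, ∫ ω, X i ω ∂μ = 0)
    (hXp : ∀ i, Integrable (fun ω => |X i ω| ^ p) μ)
    (hiA : ∀ i, i ∈ A i) (hAB : ∀ i, A i ⊆ B i) (hBC : ∀ i, B i ⊆ C i)
    (hLD1 : ∀ i, IndepFun (X i) (fun ω => fun j : ((A i)ᶜ : Finset ι) => X j.1 ω) μ)
    (hLD2 : ∀ i, IndepFun (fun ω => fun j : (A i : Finset ι) => X j.1 ω)
      (fun ω => fun j : ((B i)ᶜ : Finset ι) => X j.1 ω) μ)
    (hLD3 : ∀ i, IndepFun (fun ω => fun j : (B i : Finset ι) => X j.1 ω)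
      (fun ω => fun j : ((C i)ᶜ : Finset ι) => X j.1 ω) μ)
    (W : Ω → ℝ) (hW : ∀ ω, W ω = ∑ i, X i ω)
    (hWvar : ∫ ω, (W ω) ^ 2 ∂μ = 1)
    (κ : ℕ)
    (hκ : ∀ i, max (Finset.univ.filter fun j => (C i ∩ B j).Nonempty).card
      (Finset.univ.filter fun j => i ∈ C j).card ≤ κ) :
    ∀ z : ℝ, |(μ {ω | W ω ≤ z}).toReal - stdGaussianCDF z| ≤
      75 * (κ : ℝ) ^ (p - 1) * ∑ i, ∫ ω, |X i ω| ^ p ∂μ := by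
  intro z
  obtain rfl : W = blockSum X Finset.univ := funext hW
  rw [mul_assoc]
  rcases le_total ((κ : ℝ) ^ (p - 1) * ∑ i, ∫ ω, |X i ω| ^ p ∂μ) (1 / 75) with small | large
  · have dependence : LocalDependence μ X A B C :=
      { measurable := hXmeas
        integral_eq_zero := hXmean
        mem_A := hiA
        A_subset_B := hAB
        B_subset_C := hBC
        indep_A := fun i => (IndepFun_iff_Indep _ _ _).1 (hLD1 i)
        indep_B := fun i => (IndepFun_iff_Indep _ _ _).1 (hLD2 i)
        indep_C := fun i => (IndepFun_iff_Indep _ _ _).1 (hLD3 i) }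
    exact NormalizedLocalDependence.abs_measureReal_sub_stdGaussianCDF_le
      { dependence with
        two_lt := hp.1
        le_three := hp.2
        integrable_abs_rpow := hXp
        integral_sq_eq_one := hWvar
        card_neighbors_le := fun i => (le_max_left _ _).trans (hκ i)
        card_mem_le := fun i => (le_max_right _ _).trans (hκ i)
        moment_le := le_rfl
        b_le := small } z
  · exact (abs_measureReal_sub_stdGaussianCDF_le_one _ z).trans (by linarith)
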